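/- Kaneko–Zagier type equation for ϑ(τ,z)·ϑ(τ,2z): with all heat operators taken with index m = 5/2, the function F(τ,z) = ϑ(τ,z)·ϑ(τ,2z) satisfies H^{(5/2)}_{3}(H^{(5/2)}_{1}(F))(τ,z) − (11/25)·E₄(τ)·F(τ,z) = 0 for all (τ,z) ∈ ℍ × ℂ. -/

import Mathlib

/-!
For fixed `τ`, the left-hand side of the equation is an even theta function `f` of index `5/2` in
`z`, and such a function vanishes identically once `f(0)` and its second derivative at `0` vanish
(`eq_zero_of_index_five_halves`): together with `f(0) = 0`, parity and quasi-periodicity force zeros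
at all points of `½(ℤ + ℤτ)`, so `f` is divisible by `σ(2z)`, for a product `σ` with simple zeros
exactly on `ℤ + ℤτ`; since `f` is even it vanishes doubly at the origin, so the quotient is divisible
by `σ(z)`. The remaining factor is an entire elliptic function, hence constant, and it is zero because
`σ(z)σ(2z)` has a nonzero second derivative at the origin.

With `ϑ(τ,z)ϑ(τ,2z)` written as a double series over half-integers `r`, `s`, the heat operator of
index `5/2` multiplies the `(r,s)`-term by `(6/5)(2r - s)²`. Hence the left-hand side of the equation
is a combination of the series `M4`, `M2`, `M0` with weights `(2r - s)⁴`, `(2r - s)²`, `1` and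
coefficients in `E₂`, `E₄` (`heatMod_three`, which uses Ramanujan's `D E₂ = (E₂² - E₄)/12`). The
two Taylor coefficients at `z = 0` are expressed by the theta constants
`T_n = ∑ (-1)^k (k+½)^n e^{πiτ(k+½)²}` with `n = 1, 3, 5`, and they vanish by
`T_3 = E₂ T_1 / 4` and `T_5 = (5E₂²/48 - E₄/24) T_1` (`thetaD_three`, `thetaD_five`).

Both modular inputs come from one-dimensional spaces of level-one forms: `D E₂ - E₂²/12` is a modular
form of weight four, hence a multiple of `E₄`; and `T_1⁸` is a cusp form of weight twelve, hence a
multiple of `Δ = η²⁴`, so that `T_3/T_1` is read off from the logarithmic derivative of `η`.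
-/


open Complex Real

noncomputable section

/-- The Jacobi theta series `ϑ(τ,z) = q^{1/8} ζ^{1/2} ∑_{n∈ℤ} (−1)^n q^{n(n+1)/2} ζ^n`
with `q = e^{2πiτ}`, `ζ = e^{2πiz}`. -/
def thetaJ (τ z : ℂ) : ℂ :=
  Complex.exp (π * I * τ / 4) * Complex.exp (π * I * z) *
    ∑' n : ℤ, (-1 : ℂ) ^ n * Complex.exp (π * I * τ * n * (n + 1)) *
      Complex.exp (2 * π * I * z * n)

/-- The Dedekind eta function `η(τ) = q^{1/24} ∏_{n≥1} (1 − q^n)`. -/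
def etaD (τ : ℂ) : ℂ :=
  Complex.exp (π * I * τ / 12) * ∏' n : ℕ, (1 - Complex.exp (2 * π * I * τ * (n + 1)))

/-- The divisor power sum `σ_k(n) = ∑_{d ∣ n} d^k`. -/
def sigmaD (k n : ℕ) : ℕ := ∑ d ∈ n.divisors, d ^ k

/-- The quasi-modular Eisenstein series `E₂`. -/
def Eis2 (τ : ℂ) : ℂ :=
  1 - 24 * ∑' n : ℕ, (sigmaD 1 (n + 1) : ℂ) * Complex.exp (2 * π * I * τ * (n + 1))

/-- The Eisenstein series `E₄`. -/
def Eis4 (τ : ℂ) : ℂ :=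
  1 + 240 * ∑' n : ℕ, (sigmaD 3 (n + 1) : ℂ) * Complex.exp (2 * π * I * τ * (n + 1))

/-- The Eisenstein series `E₆`. -/
def Eis6 (τ : ℂ) : ℂ :=
  1 - 504 * ∑' n : ℕ, (sigmaD 5 (n + 1) : ℂ) * Complex.exp (2 * π * I * τ * (n + 1))

/-- The heat operator `H^{(m)}φ = (12/(2πi)) ∂φ/∂τ + (3/(4π²m)) ∂²φ/∂z²` of index `m`. -/
def heatOp (m : ℚ) (φ : ℂ → ℂ → ℂ) (τ z : ℂ) : ℂ :=
  12 / (2 * π * I) * deriv (fun t => φ t z) τ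
    + 3 / (4 * π ^ 2 * (m : ℂ)) * deriv (deriv (φ τ)) z

/-- The modular heat operator `H^{(m)}_k φ = H^{(m)}φ − ((2k−1)/2)·E₂·φ`. -/
def heatMod (m k : ℚ) (φ : ℂ → ℂ → ℂ) (τ z : ℂ) : ℂ :=
  heatOp m φ τ z - (2 * (k : ℂ) - 1) / 2 * Eis2 τ * φ τ z

/-! ### Theta series with polynomial weights -/

/-- The weighted theta series `∑ (-1)^k (k+1/2)^n e^{πiτ(k+1/2)² + 2πiz(k+1/2)}`; up to powers of
`2πi` this is the `n`-th `z`-derivative of `thetaJ`. -/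
def thetaD (n : ℕ) (τ z : ℂ) : ℂ :=
  ∑' k : ℤ, (-1 : ℂ) ^ k * ((k : ℂ) + 1 / 2) ^ n *
    cexp (π * I * τ * ((k : ℂ) + 1 / 2) ^ 2 + 2 * π * I * z * ((k : ℂ) + 1 / 2))

/-- The general term of `thetaD`. -/
def thetaTerm (n : ℕ) (τ z : ℂ) (k : ℤ) : ℂ :=
  (-1 : ℂ) ^ k * ((k : ℂ) + 1 / 2) ^ n *
    cexp (π * I * τ * ((k : ℂ) + 1 / 2) ^ 2 + 2 * π * I * z * ((k : ℂ) + 1 / 2))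

lemma thetaJ_eq (τ z : ℂ) : thetaJ τ z = thetaD 0 τ z := by
  rw [thetaJ, thetaD, ← tsum_mul_left]
  refine tsum_congr fun k => ?_
  rw [pow_zero, mul_one, ← Complex.exp_add, mul_assoc ((-1 : ℂ) ^ k), ← Complex.exp_add,
    mul_left_comm, ← Complex.exp_add]
  congr 2
  ring

/-- A summable majorant for the terms of `thetaD`, uniform over `|im z| ≤ S`, `T ≤ im τ`. -/
def thetaBound (n : ℕ) (S T : ℝ) (k : ℤ) : ℝ :=
  rexp (π * S) * ((2 : ℝ) ^ n * (|(k : ℝ)| ^ n * rexp (-π * (T * k ^ 2 - 2 * (S + T / 2) * |(k : ℝ)|))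
    + rexp (-π * (T * k ^ 2 - 2 * (S + T / 2) * |(k : ℝ)|))))

lemma summable_thetaBound (n : ℕ) (S : ℝ) {T : ℝ} (hT : 0 < T) :
    Summable (thetaBound n S T) := by
  have h1 := summable_pow_mul_jacobiTheta₂_term_bound (S + T / 2) hT n
  have h0 := summable_pow_mul_jacobiTheta₂_term_bound (S + T / 2) hT 0
  simp only [pow_zero, one_mul] at h0
  have := ((h1.add h0).mul_left ((2 : ℝ) ^ n)).mul_left (rexp (π * S))
  refine this.congr fun k => ?_
  simp [thetaBound]

lemma norm_thetaTerm_le (n : ℕ) {S T : ℝ} (hT : 0 < T) {τ z : ℂ} (hz : |z.im| ≤ S) (hτ : T ≤ τ.im)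
    (k : ℤ) : ‖thetaTerm n τ z k‖ ≤ thetaBound n S T k := by
  have hexp : ‖cexp (π * I * τ * ((k : ℂ) + 1 / 2) ^ 2 + 2 * π * I * z * ((k : ℂ) + 1 / 2))‖
      ≤ rexp (π * S) * rexp (-π * (T * k ^ 2 - 2 * (S + T / 2) * |(k : ℝ)|)) := by
    rw [Complex.norm_exp, ← Real.exp_add, Real.exp_le_exp]
    have hre : (π * I * τ * ((k : ℂ) + 1 / 2) ^ 2 + 2 * π * I * z * ((k : ℂ) + 1 / 2)).re
        = -π * (τ.im * ((k : ℝ) + 1 / 2) ^ 2 + 2 * z.im * ((k : ℝ) + 1 / 2)) := by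
      rw [show (π * I * τ * ((k : ℂ) + 1 / 2) ^ 2 + 2 * π * I * z * ((k : ℂ) + 1 / 2) : ℂ)
        = ((π * ((k : ℝ) + 1 / 2) ^ 2 : ℝ) : ℂ) * (τ * I)
          + ((2 * π * ((k : ℝ) + 1 / 2) : ℝ) : ℂ) * (z * I) by push_cast; ring]
      rw [add_re, re_ofReal_mul, re_ofReal_mul, mul_I_re, mul_I_re]
      ring
    rw [hre]
    have h1 : T * ((k : ℝ) + 1 / 2) ^ 2 ≤ τ.im * ((k : ℝ) + 1 / 2) ^ 2 := by gcongr
    have h2 : -(2 * z.im * ((k : ℝ) + 1 / 2)) ≤ 2 * S * (|(k : ℝ)| + 1 / 2) := by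
      have : |2 * z.im * ((k : ℝ) + 1 / 2)| ≤ 2 * S * (|(k : ℝ)| + 1 / 2) := by
        rw [abs_mul, abs_mul, abs_two]
        have : |(k : ℝ) + 1 / 2| ≤ |(k : ℝ)| + 1 / 2 := by
          refine (abs_add_le _ _).trans ?_
          rw [abs_of_pos (by norm_num : (0 : ℝ) < 1 / 2)]
        have hS : 0 ≤ S := (abs_nonneg _).trans hz
        gcongr
      exact (neg_le_abs _).trans this
    have h3 : -|(k : ℝ)| ≤ k := neg_abs_le _
    have h4 : T * (-|(k : ℝ)|) ≤ T * k := by gcongr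
    have key : -(τ.im * ((k : ℝ) + 1 / 2) ^ 2 + 2 * z.im * ((k : ℝ) + 1 / 2))
        ≤ S - (T * k ^ 2 - 2 * (S + T / 2) * |(k : ℝ)|) := by nlinarith
    calc _ = π * -(τ.im * ((k : ℝ) + 1 / 2) ^ 2 + 2 * z.im * ((k : ℝ) + 1 / 2)) := by ring
      _ ≤ π * (S - (T * k ^ 2 - 2 * (S + T / 2) * |(k : ℝ)|)) := by gcongr
      _ = _ := by ring
  have hk : ‖((k : ℂ) + 1 / 2) ^ n‖ ≤ 2 ^ n * (|(k : ℝ)| ^ n + 1) := by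
    rw [norm_pow]
    have h1 : ‖(k : ℂ) + 1 / 2‖ ≤ 2 * max |(k : ℝ)| 1 := by
      refine (norm_add_le _ _).trans ?_
      have : ‖(k : ℂ)‖ = |(k : ℝ)| := by
        rw [← ofReal_intCast, Complex.norm_real, Real.norm_eq_abs]
      rw [this]
      have h3 : ‖(1 / 2 : ℂ)‖ = 1 / 2 := by norm_num
      rw [h3]
      have := le_max_left |(k : ℝ)| 1
      have := le_max_right |(k : ℝ)| 1
      linarith
    calc _ ≤ (2 * max |(k : ℝ)| 1) ^ n := by gcongr
      _ = 2 ^ n * (max |(k : ℝ)| 1) ^ n := mul_pow _ _ _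
      _ ≤ _ := by
        gcongr
        rcases max_cases |(k : ℝ)| 1 with h | h
        · rw [h.1]; linarith
        · rw [h.1, one_pow]; have : 0 ≤ |(k : ℝ)| ^ n := by positivity
          linarith
  rw [thetaTerm, norm_mul, norm_mul, norm_zpow, norm_neg, norm_one, one_zpow, one_mul]
  calc _ ≤ (2 ^ n * (|(k : ℝ)| ^ n + 1)) *
      (rexp (π * S) * rexp (-π * (T * k ^ 2 - 2 * (S + T / 2) * |(k : ℝ)|))) := by gcongr
    _ = _ := by rw [thetaBound]; ring

lemma summable_thetaTerm (n : ℕ) {τ : ℂ} (hτ : 0 < τ.im) (z : ℂ) : Summable (thetaTerm n τ z) :=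
  (summable_thetaBound n |z.im| hτ).of_norm_bounded
    (norm_thetaTerm_le n hτ le_rfl le_rfl)

lemma hasDerivAt_thetaD_z (n : ℕ) {τ : ℂ} (hτ : 0 < τ.im) (z : ℂ) :
    HasDerivAt (thetaD n τ) (2 * π * I * thetaD (n + 1) τ z) z := by
  obtain ⟨S, hS⟩ := exists_gt |z.im|
  have hopen : IsOpen {w : ℂ | |w.im| < S} := isOpen_lt (by fun_prop) continuous_const
  have hconv : IsPreconnected {w : ℂ | |w.im| < S} := by
    have : {w : ℂ | |w.im| < S} = Complex.imLm ⁻¹' (Set.Ioo (-S) S) := by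
      ext w; simp [abs_lt]
    rw [this]
    exact ((convex_Ioo _ _).linear_preimage _).isPreconnected
  have key := hasDerivAt_tsum_of_isPreconnected (u := fun k => ‖(2 * π * I : ℂ)‖ * thetaBound (n + 1) S τ.im k)
    (g := fun (k : ℤ) (w : ℂ) => thetaTerm n τ w k)
    (g' := fun (k : ℤ) (w : ℂ) => 2 * π * I * thetaTerm (n + 1) τ w k)
    ((summable_thetaBound (n + 1) S hτ).mul_left _) hopen hconv
    (fun k w _ => ?_) (fun k w hw => ?_) hS (summable_thetaTerm n hτ z) hS
  · rw [tsum_mul_left] at key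
    exact key
  · have h1 : HasDerivAt (fun w : ℂ => π * I * τ * ((k : ℂ) + 1 / 2) ^ 2
        + 2 * π * I * w * ((k : ℂ) + 1 / 2)) (2 * π * I * ((k : ℂ) + 1 / 2)) w := by
      have := (((hasDerivAt_id w).const_mul (2 * π * I : ℂ)).mul_const ((k : ℂ) + 1 / 2)).const_add
        (π * I * τ * ((k : ℂ) + 1 / 2) ^ 2)
      simpa using this
    refine (h1.cexp.const_mul ((-1 : ℂ) ^ k * ((k : ℂ) + 1 / 2) ^ n)).congr_deriv ?_
    rw [thetaTerm]
    ring
  · rw [norm_mul]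
    gcongr
    exact norm_thetaTerm_le _ hτ (le_of_lt hw) le_rfl k

lemma hasDerivAt_thetaD_tau (n : ℕ) {τ : ℂ} (hτ : 0 < τ.im) (z : ℂ) :
    HasDerivAt (fun t => thetaD n t z) (π * I * thetaD (n + 2) τ z) τ := by
  obtain ⟨T, hT, hTτ⟩ := exists_between hτ
  have hopen : IsOpen {w : ℂ | T < w.im} := isOpen_lt continuous_const (by fun_prop)
  have hconv : IsPreconnected {w : ℂ | T < w.im} := by
    have : {w : ℂ | T < w.im} = Complex.imLm ⁻¹' (Set.Ioi T) := by
      ext w; simp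
    rw [this]
    exact ((convex_Ioi _).linear_preimage _).isPreconnected
  have key := hasDerivAt_tsum_of_isPreconnected
    (u := fun k => ‖(π * I : ℂ)‖ * thetaBound (n + 2) |z.im| T k)
    (g := fun (k : ℤ) (w : ℂ) => thetaTerm n w z k)
    (g' := fun (k : ℤ) (w : ℂ) => π * I * thetaTerm (n + 2) w z k)
    ((summable_thetaBound (n + 2) _ hT).mul_left _) hopen hconv
    (fun k w _ => ?_) (fun k w hw => ?_) hTτ (summable_thetaTerm n hτ z) hTτ
  · rw [tsum_mul_left] at key
    exact key
  · have h1 : HasDerivAt (fun w : ℂ => π * I * w * ((k : ℂ) + 1 / 2) ^ 2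
        + 2 * π * I * z * ((k : ℂ) + 1 / 2)) (π * I * ((k : ℂ) + 1 / 2) ^ 2) w := by
      have := (((hasDerivAt_id w).const_mul (π * I : ℂ)).mul_const (((k : ℂ) + 1 / 2) ^ 2)).add_const
        (2 * π * I * z * ((k : ℂ) + 1 / 2))
      simpa using this
    refine (h1.cexp.const_mul ((-1 : ℂ) ^ k * ((k : ℂ) + 1 / 2) ^ n)).congr_deriv ?_
    rw [thetaTerm]
    ring
  · rw [norm_mul]
    gcongr
    exact norm_thetaTerm_le _ hT le_rfl (le_of_lt hw) k

lemma thetaD_neg (n : ℕ) (τ z : ℂ) : thetaD n τ (-z) = (-1) ^ (n + 1) * thetaD n τ z := by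
  rw [thetaD, thetaD, ← tsum_mul_left, ← (Equiv.subLeft (-1 : ℤ)).tsum_eq]
  refine tsum_congr fun k => ?_
  simp only [Equiv.subLeft_apply]
  have h1 : (-1 : ℂ) ^ (-1 - k) = -(-1) ^ k := by
    rw [zpow_sub₀ (by norm_num), zpow_neg_one, div_eq_mul_inv, ← inv_zpow]
    norm_num
  have h2 : (((-1 - k : ℤ) : ℂ) + 1 / 2) = -((k : ℂ) + 1 / 2) := by push_cast; ring
  rw [h1, h2, neg_pow ((k : ℂ) + 1 / 2) n]
  have : ∀ x y : ℂ, x = y → cexp x = cexp y := fun x y h => h ▸ rfl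
  rw [this (π * I * τ * (-((k : ℂ) + 1 / 2)) ^ 2 + 2 * π * I * -z * -((k : ℂ) + 1 / 2))
    (π * I * τ * ((k : ℂ) + 1 / 2) ^ 2 + 2 * π * I * z * ((k : ℂ) + 1 / 2)) (by ring)]
  ring

lemma thetaD_add_one (n : ℕ) (τ z : ℂ) : thetaD n τ (z + 1) = - thetaD n τ z := by
  rw [thetaD, thetaD, ← tsum_neg]
  refine tsum_congr fun k => ?_
  have : cexp (π * I * τ * ((k : ℂ) + 1 / 2) ^ 2 + 2 * π * I * (z + 1) * ((k : ℂ) + 1 / 2))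
      = - cexp (π * I * τ * ((k : ℂ) + 1 / 2) ^ 2 + 2 * π * I * z * ((k : ℂ) + 1 / 2)) := by
    rw [show π * I * τ * ((k : ℂ) + 1 / 2) ^ 2 + 2 * π * I * (z + 1) * ((k : ℂ) + 1 / 2)
      = (π * I * τ * ((k : ℂ) + 1 / 2) ^ 2 + 2 * π * I * z * ((k : ℂ) + 1 / 2))
        + (k * (2 * π * I) + π * I) by ring, Complex.exp_add,
        Complex.exp_add (k * (2 * π * I)), Complex.exp_int_mul_two_pi_mul_I, Complex.exp_pi_mul_I]
    ring
  rw [this]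
  ring

/-- Translation by the period `τ` multiplies `thetaD 0` by the factor `-e^{-πiτ-2πiz}`; on the
higher derivatives it also mixes in lower orders by the binomial formula. -/
lemma thetaD_add_tau (n : ℕ) {τ : ℂ} (hτ : 0 < τ.im) (z : ℂ) :
    thetaD n τ (z + τ) = -cexp (-(π * I * τ) - 2 * π * I * z) *
      ∑ j ∈ Finset.range (n + 1), (-1) ^ (n - j) * (n.choose j : ℂ) * thetaD j τ z := by
  have hsum : ∑ j ∈ Finset.range (n + 1), (-1) ^ (n - j) * (n.choose j : ℂ) * thetaD j τ z
      = ∑' k : ℤ, ∑ j ∈ Finset.range (n + 1),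
        (-1) ^ (n - j) * (n.choose j : ℂ) * thetaTerm j τ z k := by
    rw [Summable.tsum_finsetSum fun j _ => (summable_thetaTerm j hτ z).mul_left _]
    refine Finset.sum_congr rfl fun j _ => ?_
    rw [tsum_mul_left]
    rfl
  rw [hsum, ← tsum_mul_left, thetaD, ← (Equiv.subRight (1 : ℤ)).tsum_eq]
  refine tsum_congr fun k => ?_
  simp only [Equiv.subRight_apply]
  have h1 : (-1 : ℂ) ^ (k - 1) = -(-1) ^ k := by
    rw [zpow_sub₀ (by norm_num), zpow_one, div_neg, div_one]
  have h2 : (((k - 1 : ℤ) : ℂ) + 1 / 2) = ((k : ℂ) + 1 / 2) + (-1) := by push_cast; ring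
  have h3 : cexp (π * I * τ * (((k : ℂ) + 1 / 2) + (-1)) ^ 2
      + 2 * π * I * (z + τ) * (((k : ℂ) + 1 / 2) + (-1)))
      = cexp (-(π * I * τ) - 2 * π * I * z) *
      cexp (π * I * τ * ((k : ℂ) + 1 / 2) ^ 2 + 2 * π * I * z * ((k : ℂ) + 1 / 2)) := by
    rw [← Complex.exp_add]
    congr 1
    ring
  rw [h1, h2, h3, add_pow, Finset.mul_sum, Finset.mul_sum, Finset.sum_mul]
  refine Finset.sum_congr rfl fun j _ => ?_
  rw [thetaTerm]
  ring

/-! ### Division of entire functions -/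

/-- An entire function vanishing at the zeros of `P`, all of which are simple, is divisible by `P`
in the ring of entire functions. -/
lemma exists_entire_quotient {P f : ℂ → ℂ} (hP : Differentiable ℂ P) (hf : Differentiable ℂ f)
    (hz : ∀ z, P z = 0 → f z = 0 ∧ deriv P z ≠ 0) :
    ∃ g : ℂ → ℂ, Differentiable ℂ g ∧ ∀ z, f z = g z * P z := by
  classical
  refine ⟨fun z => if P z = 0 then deriv f z / deriv P z else f z / P z, ?_, ?_⟩
  · intro z₀
    by_cases h0 : P z₀ = 0
    · obtain ⟨hf0, hd⟩ := hz z₀ h0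
      have hdP : Differentiable ℂ (dslope P z₀) := by
        rw [← differentiableOn_univ]
        exact (Complex.differentiableOn_dslope Filter.univ_mem).2 hP.differentiableOn
      have hdf : Differentiable ℂ (dslope f z₀) := by
        rw [← differentiableOn_univ]
        exact (Complex.differentiableOn_dslope Filter.univ_mem).2 hf.differentiableOn
      have hne : dslope P z₀ z₀ ≠ 0 := by rwa [dslope_same]
      have hev : ∀ᶠ z in nhds z₀, dslope P z₀ z ≠ 0 :=
        hdP.continuous.continuousAt.eventually_ne hne
      refine ((hdf z₀).div (hdP z₀) hne).congr_of_eventuallyEq ?_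
      filter_upwards [hev] with z hzne
      by_cases hzz : z = z₀
      · subst hzz
        simp [h0, dslope_same]
      · have hsub : z - z₀ ≠ 0 := sub_ne_zero.2 hzz
        have hPz : P z = (z - z₀) * dslope P z₀ z := by
          have := sub_smul_dslope P z₀ z
          rw [h0, sub_zero, smul_eq_mul] at this
          exact this.symm
        have hfz : f z = (z - z₀) * dslope f z₀ z := by
          have := sub_smul_dslope f z₀ z
          rw [hf0, sub_zero, smul_eq_mul] at this
          exact this.symm
        have hPne : P z ≠ 0 := by rw [hPz]; exact mul_ne_zero hsub hzne
        simp only [hPne, if_false, Pi.div_apply]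
        rw [hPz, hfz, mul_div_mul_left _ _ hsub]
    · have hev : ∀ᶠ z in nhds z₀, P z ≠ 0 := hP.continuous.continuousAt.eventually_ne h0
      refine ((hf z₀).div (hP z₀) h0).congr_of_eventuallyEq ?_
      filter_upwards [hev] with z hzne
      simp [hzne]
  · intro z
    by_cases h0 : P z = 0
    · simp [h0, (hz z h0).1]
    · simp [h0]

lemma entire_mul_right_cancel {P a b : ℂ → ℂ} (hP : Differentiable ℂ P) (ha : Differentiable ℂ a)
    (hb : Differentiable ℂ b) (hz : ∀ z, P z = 0 → deriv P z ≠ 0)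
    (hab : ∀ z, a z * P z = b z * P z) (z : ℂ) : a z = b z := by
  by_cases h0 : P z = 0
  · have h1 := (ha z).hasDerivAt.mul (hP z).hasDerivAt
    have h2 := (hb z).hasDerivAt.mul (hP z).hasDerivAt
    have h3 : (a * P) = (b * P) := funext hab
    rw [h3] at h1
    have h4 := h1.unique h2
    rw [h0, mul_zero, mul_zero, zero_add, zero_add] at h4
    exact mul_right_cancel₀ (hz z h0) h4
  · exact mul_right_cancel₀ h0 (hab z)

/-! ### A model sigma function given by an infinite product -/

/-- The `q`-Pochhammer product `∏_{n ≥ 0} (1 - q^n x)`. -/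
def poch (q x : ℂ) : ℂ := ∏' n : ℕ, (1 + -(q ^ n * x))

lemma summable_poch {q : ℂ} (hq : ‖q‖ < 1) (x : ℂ) : Summable fun n : ℕ => ‖-(q ^ n * x)‖ := by
  simpa [norm_mul, norm_pow] using
    (summable_geometric_of_lt_one (norm_nonneg q) hq).mul_right ‖x‖

lemma poch_eq_mul {q : ℂ} (hq : ‖q‖ < 1) (x : ℂ) : poch q x = (1 - x) * poch q (q * x) := by
  have hm : Multipliable fun n : ℕ => (1 + -(q ^ (n + 1) * x)) := by
    apply multipliable_one_add_of_summable
    exact (summable_nat_add_iff (f := fun n : ℕ => ‖-(q ^ n * x)‖) 1).2 (summable_poch hq x)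
  have h1 := tprod_eq_zero_mul' (f := fun n : ℕ => (1 + -(q ^ n * x))) hm
  have h2 : ∀ n : ℕ, q ^ (n + 1) * x = q ^ n * (q * x) := fun n => by ring
  simp only [h2, pow_zero, one_mul, ← sub_eq_add_neg] at h1
  simp only [poch, ← sub_eq_add_neg]
  exact h1

lemma poch_eq_zero {q : ℂ} (hq : ‖q‖ < 1) {x : ℂ} (h : poch q x = 0) :
    ∃ n : ℕ, q ^ n * x = 1 := by
  by_contra! hne
  refine tprod_one_add_ne_zero_of_summable (f := fun n : ℕ => -(q ^ n * x)) (fun n hn => ?_)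
    (summable_poch hq x) h
  apply hne n
  linear_combination -hn

lemma differentiable_poch {q : ℂ} (hq : ‖q‖ < 1) : Differentiable ℂ (poch q) := by
  intro x
  have hR : DifferentiableOn ℂ (poch q) (Metric.ball 0 (‖x‖ + 1)) := by
    have hs : Summable fun n : ℕ => ‖q‖ ^ n * (‖x‖ + 1) :=
      (summable_geometric_of_lt_one (norm_nonneg q) hq).mul_right _
    have := hs.hasProdLocallyUniformlyOn_nat_one_add (f := fun n y => -(q ^ n * y))
      (K := Metric.ball (0 : ℂ) (‖x‖ + 1)) Metric.isOpen_ball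
      (.of_forall fun n y hy => by
        rw [norm_neg, norm_mul, norm_pow]
        gcongr
        simpa using (Metric.mem_ball.1 hy).le) (fun n => by fun_prop)
    exact this.differentiableOn
      (.of_forall fun _ ↦ by simpa [Finset.prod_fn] using
        DifferentiableOn.finsetProd (fun _ _ ↦ by fun_prop)) Metric.isOpen_ball
  exact hR.differentiableAt (Metric.isOpen_ball.mem_nhds (by simp))

/-- The nome `q = e^{2πiτ}`. -/
def nome (τ : ℂ) : ℂ := cexp (2 * π * I * τ)

lemma norm_nome_lt {τ : ℂ} (hτ : 0 < τ.im) : ‖nome τ‖ < 1 := by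
  rw [nome, Complex.norm_exp, Real.exp_lt_one_iff]
  simp
  positivity

/-- The product `ζ^{-1/2} ∏_{n ≥ 0} (1 - q^n ζ)(1 - q^{n+1} ζ^{-1})`, an entire function of `z`
with simple zeros exactly at `ℤ + ℤτ`. By the Jacobi triple product it is proportional to `ϑ`, but
this fact is not needed. -/
def sig (τ z : ℂ) : ℂ :=
  cexp (-(π * I * z)) * poch (nome τ) (cexp (2 * π * I * z)) *
    poch (nome τ) (nome τ * cexp (-(2 * π * I * z)))

lemma differentiable_sig {τ : ℂ} (hτ : 0 < τ.im) : Differentiable ℂ (sig τ) := by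
  have h := differentiable_poch (norm_nome_lt hτ)
  unfold sig
  refine ((by fun_prop : Differentiable ℂ fun z : ℂ => cexp (-(π * I * z))).mul
    (h.comp (by fun_prop))).mul (h.comp (by fun_prop))

lemma sig_add_one (τ z : ℂ) : sig τ (z + 1) = -sig τ z := by
  have h1 : cexp (2 * π * I * (z + 1)) = cexp (2 * π * I * z) := by
    rw [mul_add, mul_one, Complex.exp_add, Complex.exp_two_pi_mul_I, mul_one]
  have h2 : cexp (-(2 * π * I * (z + 1))) = cexp (-(2 * π * I * z)) := by
    rw [Complex.exp_neg, h1, Complex.exp_neg]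
  have h3 : cexp (-(π * I * (z + 1))) = -cexp (-(π * I * z)) := by
    rw [show -(π * I * (z + 1)) = -(π * I * z) + -(π * I) by ring, Complex.exp_add,
      Complex.exp_neg (π * I), Complex.exp_pi_mul_I]
    norm_num
  unfold sig
  rw [h1, h2, h3]
  ring

lemma sig_add_tau {τ : ℂ} (hτ : 0 < τ.im) (z : ℂ) :
    sig τ (z + τ) = -cexp (-(π * I * τ) - 2 * π * I * z) * sig τ z := by
  have hq := norm_nome_lt hτ
  have h1 : cexp (2 * π * I * (z + τ)) = nome τ * cexp (2 * π * I * z) := by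
    rw [nome, ← Complex.exp_add]; ring_nf
  have h2 : nome τ * cexp (-(2 * π * I * (z + τ))) = cexp (-(2 * π * I * z)) := by
    rw [nome, ← Complex.exp_add]; ring_nf
  have h3 : cexp (-(π * I * (z + τ))) = cexp (-(π * I * τ)) * cexp (-(π * I * z)) := by
    rw [← Complex.exp_add]; ring_nf
  have h4 : cexp (-(π * I * τ) - 2 * π * I * z) =
      cexp (-(π * I * τ)) * cexp (-(2 * π * I * z)) := by
    rw [← Complex.exp_add]; ring_nf
  have h5 : cexp (2 * π * I * z) * cexp (-(2 * π * I * z)) = 1 := by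
    rw [← Complex.exp_add, add_neg_cancel, Complex.exp_zero]
  unfold sig
  rw [h1, h2, h3, h4, poch_eq_mul hq (cexp (2 * π * I * z)),
    poch_eq_mul hq (cexp (-(2 * π * I * z)))]
  linear_combination (cexp (-(π * I * τ)) * cexp (-(π * I * z)) *
    poch (nome τ) (nome τ * cexp (2 * π * I * z)) *
    poch (nome τ) (nome τ * cexp (-(2 * π * I * z)))) * (-h5)

lemma hasDerivAt_sig_zero {τ : ℂ} (hτ : 0 < τ.im) :
    HasDerivAt (sig τ) (-(2 * π * I) * poch (nome τ) (nome τ) ^ 2) 0 := by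
  have hq := norm_nome_lt hτ
  have h := differentiable_poch hq
  have hfun : sig τ = fun z => (1 - cexp (2 * π * I * z)) * (cexp (-(π * I * z)) *
      poch (nome τ) (nome τ * cexp (2 * π * I * z)) *
        poch (nome τ) (nome τ * cexp (-(2 * π * I * z)))) := by
    ext z
    rw [sig, poch_eq_mul hq]
    ring
  have hB : Differentiable ℂ fun z => (cexp (-(π * I * z)) *
      poch (nome τ) (nome τ * cexp (2 * π * I * z)) *
        poch (nome τ) (nome τ * cexp (-(2 * π * I * z)))) :=
    ((by fun_prop : Differentiable ℂ fun z : ℂ => cexp (-(π * I * z))).mul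
      (h.comp (by fun_prop))).mul (h.comp (by fun_prop))
  have hA : HasDerivAt (fun z : ℂ => 1 - cexp (2 * π * I * z)) (-(2 * π * I)) 0 := by
    have h1 : HasDerivAt (fun z : ℂ => 2 * π * I * z) (2 * π * I) 0 := by
      simpa using (hasDerivAt_id (0 : ℂ)).const_mul (2 * π * I)
    simpa using (h1.cexp).const_sub 1
  have := hA.mul (hB 0).hasDerivAt
  rw [hfun]
  refine this.congr_deriv ?_
  rw [show poch (nome τ) (nome τ) ^ 2 = poch (nome τ) (nome τ) * poch (nome τ) (nome τ) by ring]
  simp [mul_assoc]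

lemma poch_nome_ne_zero {τ : ℂ} (hτ : 0 < τ.im) : poch (nome τ) (nome τ) ≠ 0 := by
  intro h
  obtain ⟨n, hn⟩ := poch_eq_zero (norm_nome_lt hτ) h
  rw [← pow_succ] at hn
  have h1 : ‖nome τ‖ ^ (n + 1) = 1 := by rw [← norm_pow, hn, norm_one]
  have h2 := pow_lt_one₀ (norm_nonneg _) (norm_nome_lt hτ) (Nat.succ_ne_zero n)
  exact absurd h1 h2.ne

lemma deriv_sig_zero_ne {τ : ℂ} (hτ : 0 < τ.im) : deriv (sig τ) 0 ≠ 0 := by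
  rw [(hasDerivAt_sig_zero hτ).deriv]
  exact mul_ne_zero (neg_ne_zero.2 Complex.two_pi_I_ne_zero)
    (pow_ne_zero _ (poch_nome_ne_zero hτ))

lemma sig_zero {τ : ℂ} (hτ : 0 < τ.im) : sig τ 0 = 0 := by
  rw [sig, poch_eq_mul (norm_nome_lt hτ)]
  simp

/-- A predicate invariant under translation by `1` and by `τ` is invariant under `ℤ + ℤτ`. -/
lemma lattice_invariant {τ : ℂ} {P : ℂ → Prop} (h1 : ∀ z, P (z + 1) ↔ P z)
    (h2 : ∀ z, P (z + τ) ↔ P z) (m n : ℤ) (z : ℂ) : P (z + m + n * τ) ↔ P z := by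
  have a1 : ∀ m : ℤ, ∀ z : ℂ, P (z + m) ↔ P z := by
    intro m
    induction m using Int.induction_on with
    | zero => simp
    | succ k ih => intro z; rw [← ih z, ← h1 (z + ((k : ℤ) : ℂ))]; push_cast; ring_nf
    | pred k ih => intro z; rw [← ih z, ← h1 (z + (_ : ℤ))]; push_cast; ring_nf
  have a2 : ∀ n : ℤ, ∀ z : ℂ, P (z + n * τ) ↔ P z := by
    intro m
    induction m using Int.induction_on with
    | zero => simp
    | succ k ih => intro z; rw [← ih z, ← h2 (z + ((k : ℤ) : ℂ) * τ)]; push_cast; ring_nf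
    | pred k ih => intro z; rw [← ih z, ← h2 (z + (_ : ℤ) * τ)]; push_cast; ring_nf
  rw [a2, a1]

lemma sig_zeros {τ : ℂ} (hτ : 0 < τ.im) {z : ℂ} (h : sig τ z = 0) :
    ∃ m n : ℤ, z = m + n * τ := by
  have hq := norm_nome_lt hτ
  have hpi : (2 * π * I : ℂ) ≠ 0 := Complex.two_pi_I_ne_zero
  rw [sig, mul_eq_zero, mul_eq_zero] at h
  rcases h with (h | h) | h
  · exact absurd h (Complex.exp_ne_zero _)
  · obtain ⟨n, hn⟩ := poch_eq_zero hq h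
    rw [nome, ← Complex.exp_nat_mul, ← Complex.exp_add, Complex.exp_eq_one_iff] at hn
    obtain ⟨m, hm⟩ := hn
    refine ⟨m, -n, mul_left_cancel₀ hpi ?_⟩
    push_cast
    linear_combination hm
  · obtain ⟨n, hn⟩ := poch_eq_zero hq h
    rw [nome, ← Complex.exp_nat_mul, ← Complex.exp_add, ← Complex.exp_add,
      Complex.exp_eq_one_iff] at hn
    obtain ⟨m, hm⟩ := hn
    refine ⟨-m, n + 1, mul_left_cancel₀ hpi ?_⟩
    push_cast
    linear_combination -hm

/-- If `h (z + ω) = e(z) h(z)` with `e` nowhere zero, then simple zeros of `h` are translated by `ω`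
to simple zeros. -/
lemma simple_zero_translate {h e : ℂ → ℂ} {ω : ℂ} (hh : Differentiable ℂ h)
    (he : Differentiable ℂ e) (hne : ∀ z, e z ≠ 0) (hq : ∀ z, h (z + ω) = e z * h z) (z : ℂ) :
    (h (z + ω) = 0 ∧ deriv h (z + ω) ≠ 0) ↔ (h z = 0 ∧ deriv h z ≠ 0) := by
  rw [hq, mul_eq_zero, or_iff_right (hne z)]
  refine and_congr_right fun h0 => not_congr ?_
  have h1 : deriv (fun z => h (z + ω)) z = e z * deriv h z := by
    rw [funext hq, deriv_fun_mul (he z) (hh z), h0, mul_zero, zero_add]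
  rw [deriv_comp_add_const] at h1
  rw [h1, mul_eq_zero, or_iff_right (hne z)]

lemma sig_simple {τ : ℂ} (hτ : 0 < τ.im) {z : ℂ} (h : sig τ z = 0) : deriv (sig τ) z ≠ 0 := by
  obtain ⟨m, n, rfl⟩ := sig_zeros hτ h
  have hd := differentiable_sig hτ
  have := (lattice_invariant (τ := τ) (P := fun z => sig τ z = 0 ∧ deriv (sig τ) z ≠ 0)
    (simple_zero_translate hd (e := fun _ => -1) (by fun_prop) (by simp)
      (fun z => by rw [sig_add_one]; ring))
    (simple_zero_translate hd (e := fun z => -cexp (-(π * I * τ) - 2 * π * I * z)) (by fun_prop)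
      (fun z => neg_ne_zero.2 (Complex.exp_ne_zero _))
      (sig_add_tau hτ)) m n 0).2 ⟨sig_zero hτ, deriv_sig_zero_ne hτ⟩
  rw [zero_add] at this
  exact this.2

lemma exists_eq_lattice_add {τ : ℂ} (hτ : 0 < τ.im) (z : ℂ) : ∃ (m n : ℤ) (x y : ℝ),
    x ∈ Set.Icc (0 : ℝ) 1 ∧ y ∈ Set.Icc (0 : ℝ) 1 ∧ z = (x + y * τ) + m + n * τ := by
  set y := z.im / τ.im with hy
  set x := z.re - y * τ.re with hx
  refine ⟨⌊x⌋, ⌊y⌋, Int.fract x, Int.fract y, ⟨Int.fract_nonneg _, (Int.fract_lt_one _).le⟩,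
    ⟨Int.fract_nonneg _, (Int.fract_lt_one _).le⟩, ?_⟩
  have hz : z = x + y * τ := by
    apply Complex.ext
    · simp [hx]
    · simp [hy]
      field_simp
  have e1 : ((Int.fract x : ℝ) : ℂ) + (⌊x⌋ : ℂ) = x := by
    exact_mod_cast congrArg (fun r : ℝ => (r : ℂ)) (Int.fract_add_floor x)
  have e2 : ((Int.fract y : ℝ) : ℂ) + (⌊y⌋ : ℂ) = y := by
    exact_mod_cast congrArg (fun r : ℝ => (r : ℂ)) (Int.fract_add_floor y)
  rw [hz]
  linear_combination -e1 - τ * e2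

/-- An entire elliptic function is constant. -/
lemma periodic_const {τ : ℂ} (hτ : 0 < τ.im) {k : ℂ → ℂ} (hk : Differentiable ℂ k)
    (h1 : ∀ z, k (z + 1) = k z) (h2 : ∀ z, k (z + τ) = k z) (z : ℂ) : k z = k 0 := by
  apply hk.apply_eq_apply_of_bounded
  have hc : IsCompact ((fun p : ℝ × ℝ => k (p.1 + p.2 * τ)) ''
      (Set.Icc (0 : ℝ) 1 ×ˢ Set.Icc (0 : ℝ) 1)) := by
    refine (isCompact_Icc.prod isCompact_Icc).image ?_
    exact hk.continuous.comp (by fun_prop)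
  refine hc.isBounded.subset ?_
  rintro _ ⟨w, rfl⟩
  obtain ⟨m, n, x, y, hx, hy, rfl⟩ := exists_eq_lattice_add hτ w
  refine ⟨(x, y), ⟨hx, hy⟩, ?_⟩
  exact ((lattice_invariant (τ := τ) (P := fun w => k (x + y * τ) = k w)
    (fun z => by rw [h1]) (fun z => by rw [h2]) m n _).2 rfl)

/-! ### Even theta functions of index `5/2` -/

/-- An even theta function of index `5/2` with characters `-1` vanishes identically as soon as it
vanishes to order greater than two at the origin: parity forces zeros at the half-periods, so `f` is
divisible by `sig(2z)`, then by `sig(z)`, and the quotient is elliptic. -/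
lemma eq_zero_of_index_five_halves {τ : ℂ} (hτ : 0 < τ.im) {f f' : ℂ → ℂ}
    (hf : ∀ z, HasDerivAt f (f' z) z) (hf2 : HasDerivAt f' 0 0) (h0 : f 0 = 0)
    (heven : ∀ z, f (-z) = f z) (h1 : ∀ z, f (z + 1) = -f z)
    (h2 : ∀ z, f (z + τ) = -cexp (-(5 * π * I * τ) - 10 * π * I * z) * f z) (z : ℂ) :
    f z = 0 := by
  have hfd : Differentiable ℂ f := fun z => (hf z).differentiableAt
  have hs := differentiable_sig hτ
  set s2 : ℂ → ℂ := fun z => sig τ (2 * z) with hs2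
  have hs2d' : ∀ z, HasDerivAt s2 (2 * deriv (sig τ) (2 * z)) z := by
    intro z
    have := HasDerivAt.comp z (hs (2 * z)).hasDerivAt ((hasDerivAt_id z).const_mul 2)
    exact this.congr_deriv (by ring)
  have hs2d : Differentiable ℂ s2 := fun z => (hs2d' z).differentiableAt
  have hs2simple : ∀ z, s2 z = 0 → deriv s2 z ≠ 0 := by
    intro z hz
    rw [(hs2d' z).deriv]
    exact mul_ne_zero two_ne_zero (sig_simple hτ hz)
  have hs2_one : ∀ z, s2 (z + 1) = s2 z := by
    intro z
    simp only [hs2]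
    rw [show 2 * (z + 1) = 2 * z + 1 + 1 by ring, sig_add_one, sig_add_one, neg_neg]
  have hs2_tau : ∀ z, s2 (z + τ) = cexp (-(4 * π * I * τ) - 8 * π * I * z) * s2 z := by
    intro z
    simp only [hs2]
    rw [show 2 * (z + τ) = 2 * z + τ + τ by ring, sig_add_tau hτ, sig_add_tau hτ, ← mul_assoc,
      neg_mul_neg, ← Complex.exp_add]
    congr 2
    ring
  have hinv := fun m n w => lattice_invariant (τ := τ) (P := fun z => f z = 0)
    (fun z => by rw [h1, neg_eq_zero])
    (fun z => by rw [h2, mul_eq_zero, or_iff_right (neg_ne_zero.2 (Complex.exp_ne_zero _))]) m n w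
  have self_neg : ∀ x : ℂ, x = -x → x = 0 := fun x hx => by
    have : 2 * x = 0 := by linear_combination hx
    simpa using this
  -- the functional equations identify `f` at each half-period with its negative
  have v1 : f (1 / 2) = 0 := self_neg _ (by
    have := h1 (-(1 / 2))
    rw [heven] at this
    rw [← this]; norm_num)
  have v2 : f (τ / 2) = 0 := self_neg _ (by
    have := h2 (-(τ / 2))
    rw [heven, show -(5 * π * I * τ) - 10 * π * I * -(τ / 2) = 0 by ring, Complex.exp_zero] at this
    rw [neg_one_mul] at this
    rw [← this]; ring_nf)
  have v3 : f (1 / 2 + τ / 2) = 0 := self_neg _ (by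
    have := h2 (-(1 / 2 + τ / 2) + 1)
    rw [h1, heven, show -(5 * π * I * τ) - 10 * π * I * (-(1 / 2 + τ / 2) + 1)
      = π * I + ((-3 : ℤ) : ℂ) * (2 * π * I) by push_cast; ring,
      Complex.exp_add, Complex.exp_int_mul_two_pi_mul_I, Complex.exp_pi_mul_I] at this
    rw [show -(1 / 2 + τ / 2) + 1 + τ = 1 / 2 + τ / 2 by ring] at this
    linear_combination this)
  have hfs2 : ∀ z, s2 z = 0 → f z = 0 ∧ deriv s2 z ≠ 0 := by
    intro z hz
    refine ⟨?_, hs2simple z hz⟩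
    obtain ⟨m, n, hmn⟩ := sig_zeros hτ hz
    obtain ⟨a, ha⟩ := Int.even_or_odd' m
    obtain ⟨c, hc⟩ := Int.even_or_odd' n
    rcases ha with rfl | rfl <;> rcases hc with rfl | rfl
    · have : z = 0 + a + c * τ := by push_cast at hmn; linear_combination hmn / 2
      rw [this, hinv]; exact h0
    · have : z = τ / 2 + a + c * τ := by push_cast at hmn; linear_combination hmn / 2
      rw [this, hinv]; exact v2
    · have : z = 1 / 2 + a + c * τ := by push_cast at hmn; linear_combination hmn / 2
      rw [this, hinv]; exact v1
    · have : z = (1 / 2 + τ / 2) + a + c * τ := by push_cast at hmn; linear_combination hmn / 2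
      rw [this, hinv]; exact v3
  obtain ⟨g, hg, hfg⟩ := exists_entire_quotient hs2d hfd hfs2
  -- `g = f(z) / sig(2z)` is a theta function of index `1/2`
  have g1 : ∀ z, g (z + 1) = -g z := by
    intro z
    refine entire_mul_right_cancel hs2d (a := fun z => g (z + 1)) (b := fun z => -g z)
      (hg.comp (by fun_prop)) hg.neg hs2simple (fun z => ?_) z
    have := hfg (z + 1)
    rw [h1, hfg, hs2_one] at this
    linear_combination -this
  have g2 : ∀ z, g (z + τ) = -cexp (-(π * I * τ) - 2 * π * I * z) * g z := by
    intro z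
    refine entire_mul_right_cancel hs2d (a := fun z => g (z + τ))
      (b := fun z => -cexp (-(π * I * τ) - 2 * π * I * z) * g z)
      (hg.comp (by fun_prop)) (Differentiable.mul (by fun_prop) hg) hs2simple (fun z => ?_) z
    have := hfg (z + τ)
    rw [h2, hfg, hs2_tau, show -(5 * π * I * τ) - 10 * π * I * z =
      (-(4 * π * I * τ) - 8 * π * I * z) + (-(π * I * τ) - 2 * π * I * z) by ring,
      Complex.exp_add] at this
    refine mul_left_cancel₀ (Complex.exp_ne_zero (-(4 * π * I * τ) - 8 * π * I * z)) ?_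
    linear_combination -this
  -- evenness makes the derivative of `f` at the origin vanish
  have hf'0 : f' 0 = 0 := by
    have h3 := deriv_comp_neg f 0
    rw [funext heven, neg_zero, (hf 0).deriv] at h3
    exact self_neg _ h3
  have hs20 : s2 0 = 0 := by simp [hs2, sig_zero hτ]
  have g0 : g 0 = 0 := by
    have h3 := (hg 0).hasDerivAt.mul (hs2d' 0)
    have h4 : f = g * s2 := funext hfg
    rw [← h4] at h3
    have h5 := h3.unique (hf 0)
    rw [hf'0, hs20, mul_zero, zero_add, mul_zero] at h5
    rcases mul_eq_zero.1 h5 with h6 | h6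
    · exact h6
    · exact absurd h6 (mul_ne_zero two_ne_zero (deriv_sig_zero_ne hτ))
  have ginv := fun m n w => lattice_invariant (τ := τ) (P := fun z => g z = 0)
    (fun z => by rw [g1, neg_eq_zero])
    (fun z => by rw [g2, mul_eq_zero, or_iff_right (neg_ne_zero.2 (Complex.exp_ne_zero _))]) m n w
  have hgs : ∀ z, sig τ z = 0 → g z = 0 ∧ deriv (sig τ) z ≠ 0 := by
    intro z hz
    refine ⟨?_, sig_simple hτ hz⟩
    obtain ⟨m, n, rfl⟩ := sig_zeros hτ hz
    have := (ginv m n 0).2 g0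
    rwa [zero_add] at this
  obtain ⟨k, hk, hgk⟩ := exists_entire_quotient hs hg hgs
  -- `k = f(z) / (sig(z) sig(2z))` is elliptic
  have k1 : ∀ z, k (z + 1) = k z := by
    intro z
    refine entire_mul_right_cancel hs (a := fun z => k (z + 1)) (b := k)
      (hk.comp (by fun_prop)) hk (fun z => sig_simple hτ) (fun z => ?_) z
    have := hgk (z + 1)
    rw [g1, hgk, sig_add_one] at this
    linear_combination this
  have k2 : ∀ z, k (z + τ) = k z := by
    intro z
    refine entire_mul_right_cancel hs (a := fun z => k (z + τ)) (b := k)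
      (hk.comp (by fun_prop)) hk (fun z => sig_simple hτ) (fun z => ?_) z
    have := hgk (z + τ)
    rw [g2, hgk, sig_add_tau hτ] at this
    refine mul_left_cancel₀ (Complex.exp_ne_zero (-(π * I * τ) - 2 * π * I * z)) ?_
    linear_combination this
  have kc := periodic_const hτ hk k1 k2
  have hfk : ∀ z, f z = k 0 * (sig τ z * s2 z) := by
    intro z
    rw [hfg, hgk, kc]
    ring
  have hf' : f' = fun z => k 0 * (deriv (sig τ) z * s2 z +
      sig τ z * (2 * deriv (sig τ) (2 * z))) := by
    ext z
    refine (hf z).unique ?_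
    rw [show f = fun z => k 0 * (sig τ z * s2 z) from funext hfk]
    exact ((hs z).hasDerivAt.mul (hs2d' z)).const_mul _
  have hds : Differentiable ℂ (deriv (sig τ)) := fun z =>
    (hs.analyticAt z).deriv.differentiableAt
  have hds2 : Differentiable ℂ fun z => 2 * deriv (sig τ) (2 * z) :=
    (hds.comp (by fun_prop : Differentiable ℂ fun z : ℂ => 2 * z)).const_mul 2
  have h3 := (((hds 0).hasDerivAt.mul (hs2d' 0)).add
    ((hs 0).hasDerivAt.mul (hds2 0).hasDerivAt)).const_mul (k 0)
  -- the second derivative of `sig(z) sig(2z)` at the origin is a nonzero multiple of the square of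
  -- the derivative of `sig` there
  have hk0 : k 0 = 0 := by
    rw [hf'] at hf2
    have h4 := hf2.unique h3
    rw [hs20, sig_zero hτ, mul_zero, mul_zero, zero_mul, zero_add, add_zero] at h4
    have hne := deriv_sig_zero_ne hτ
    rcases mul_eq_zero.1 h4.symm with h5 | h5
    · exact h5
    · exfalso
      have : deriv (sig τ) 0 * deriv (sig τ) 0 = 0 := by linear_combination h5 / 4
      exact hne (mul_self_eq_zero.1 this)
  rw [hfk, hk0, zero_mul]

/-! ### The heat-operator images of `ϑ(τ,z)ϑ(τ,2z)` as theta functions in `z` -/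

/-- `ϑ(τ,z)ϑ(τ,2z)`. -/
def M0 (τ z : ℂ) : ℂ := thetaD 0 τ z * thetaD 0 τ (2 * z)

/-- The double theta series of `ϑ(τ,z)ϑ(τ,2z)` with summands weighted by `(2r - s)²`, where `r`
and `s` are the half-integral summation variables of the two factors. -/
def M2 (τ z : ℂ) : ℂ :=
  4 * (thetaD 2 τ z * thetaD 0 τ (2 * z)) - 4 * (thetaD 1 τ z * thetaD 1 τ (2 * z))
    + thetaD 0 τ z * thetaD 2 τ (2 * z)

/-- The double theta series of `ϑ(τ,z)ϑ(τ,2z)` with summands weighted by `(2r - s)⁴`. -/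
def M4 (τ z : ℂ) : ℂ :=
  16 * (thetaD 4 τ z * thetaD 0 τ (2 * z)) - 32 * (thetaD 3 τ z * thetaD 1 τ (2 * z))
    + 24 * (thetaD 2 τ z * thetaD 2 τ (2 * z)) - 8 * (thetaD 1 τ z * thetaD 3 τ (2 * z))
    + thetaD 0 τ z * thetaD 4 τ (2 * z)

lemma thetaD_two_mul_add_tau_zero {τ : ℂ} (hτ : 0 < τ.im) (z : ℂ) :
    thetaD 0 τ (2 * (z + τ)) = cexp (-(4 * π * I * τ) - 8 * π * I * z) * thetaD 0 τ (2 * z) := by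
  rw [show 2 * (z + τ) = 2 * z + τ + τ by ring, show -(4 * π * I * τ) - 8 * π * I * z =
    (-(π * I * τ) - 2 * π * I * (2 * z + τ)) + (-(π * I * τ) - 2 * π * I * (2 * z)) by ring,
    Complex.exp_add]
  simp only [thetaD_add_tau _ hτ, Finset.sum_range_succ, Finset.sum_range_zero]
  norm_num [Nat.choose]
  ring

lemma thetaD_two_mul_add_tau_one {τ : ℂ} (hτ : 0 < τ.im) (z : ℂ) :
    thetaD 1 τ (2 * (z + τ)) = cexp (-(4 * π * I * τ) - 8 * π * I * z) *
      (thetaD 1 τ (2 * z) - 2 * thetaD 0 τ (2 * z)) := by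
  rw [show 2 * (z + τ) = 2 * z + τ + τ by ring, show -(4 * π * I * τ) - 8 * π * I * z =
    (-(π * I * τ) - 2 * π * I * (2 * z + τ)) + (-(π * I * τ) - 2 * π * I * (2 * z)) by ring,
    Complex.exp_add]
  simp only [thetaD_add_tau _ hτ, Finset.sum_range_succ, Finset.sum_range_zero]
  norm_num [Nat.choose]
  ring

lemma thetaD_two_mul_add_tau_two {τ : ℂ} (hτ : 0 < τ.im) (z : ℂ) :
    thetaD 2 τ (2 * (z + τ)) = cexp (-(4 * π * I * τ) - 8 * π * I * z) *
      (thetaD 2 τ (2 * z) - 4 * thetaD 1 τ (2 * z) + 4 * thetaD 0 τ (2 * z)) := by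
  rw [show 2 * (z + τ) = 2 * z + τ + τ by ring, show -(4 * π * I * τ) - 8 * π * I * z =
    (-(π * I * τ) - 2 * π * I * (2 * z + τ)) + (-(π * I * τ) - 2 * π * I * (2 * z)) by ring,
    Complex.exp_add]
  simp only [thetaD_add_tau _ hτ, Finset.sum_range_succ, Finset.sum_range_zero]
  norm_num [Nat.choose]
  ring

lemma thetaD_two_mul_add_tau_three {τ : ℂ} (hτ : 0 < τ.im) (z : ℂ) :
    thetaD 3 τ (2 * (z + τ)) = cexp (-(4 * π * I * τ) - 8 * π * I * z) *
      (thetaD 3 τ (2 * z) - 6 * thetaD 2 τ (2 * z) + 12 * thetaD 1 τ (2 * z)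
        - 8 * thetaD 0 τ (2 * z)) := by
  rw [show 2 * (z + τ) = 2 * z + τ + τ by ring, show -(4 * π * I * τ) - 8 * π * I * z =
    (-(π * I * τ) - 2 * π * I * (2 * z + τ)) + (-(π * I * τ) - 2 * π * I * (2 * z)) by ring,
    Complex.exp_add]
  simp only [thetaD_add_tau _ hτ, Finset.sum_range_succ, Finset.sum_range_zero]
  norm_num [Nat.choose]
  ring

lemma thetaD_two_mul_add_tau_four {τ : ℂ} (hτ : 0 < τ.im) (z : ℂ) :
    thetaD 4 τ (2 * (z + τ)) = cexp (-(4 * π * I * τ) - 8 * π * I * z) *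
      (thetaD 4 τ (2 * z) - 8 * thetaD 3 τ (2 * z) + 24 * thetaD 2 τ (2 * z)
        - 32 * thetaD 1 τ (2 * z) + 16 * thetaD 0 τ (2 * z)) := by
  rw [show 2 * (z + τ) = 2 * z + τ + τ by ring, show -(4 * π * I * τ) - 8 * π * I * z =
    (-(π * I * τ) - 2 * π * I * (2 * z + τ)) + (-(π * I * τ) - 2 * π * I * (2 * z)) by ring,
    Complex.exp_add]
  simp only [thetaD_add_tau _ hτ, Finset.sum_range_succ, Finset.sum_range_zero]
  norm_num [Nat.choose]
  ring

lemma exp_index_five_halves (τ z : ℂ) : cexp (-(5 * π * I * τ) - 10 * π * I * z) =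
    cexp (-(π * I * τ) - 2 * π * I * z) * cexp (-(4 * π * I * τ) - 8 * π * I * z) := by
  rw [← Complex.exp_add]
  congr 1
  ring

/-- The weights `(2r - s)^n` are unchanged by the shift `(r, s) ↦ (r - 1, s - 2)` induced by
`z ↦ z + τ`, so `M0`, `M2`, `M4` share one automorphy factor. -/
lemma M_add_tau {τ : ℂ} (hτ : 0 < τ.im) (z : ℂ) :
    M0 τ (z + τ) = -cexp (-(5 * π * I * τ) - 10 * π * I * z) * M0 τ z ∧
    M2 τ (z + τ) = -cexp (-(5 * π * I * τ) - 10 * π * I * z) * M2 τ z ∧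
    M4 τ (z + τ) = -cexp (-(5 * π * I * τ) - 10 * π * I * z) * M4 τ z := by
  simp only [M0, M2, M4, thetaD_two_mul_add_tau_zero hτ, thetaD_two_mul_add_tau_one hτ,
    thetaD_two_mul_add_tau_two hτ, thetaD_two_mul_add_tau_three hτ,
    thetaD_two_mul_add_tau_four hτ, exp_index_five_halves]
  simp only [thetaD_add_tau _ hτ, Finset.sum_range_succ, Finset.sum_range_zero]
  norm_num [Nat.choose]
  refine ⟨?_, ?_, ?_⟩ <;> ring

lemma M_add_one (τ z : ℂ) :
    M0 τ (z + 1) = -M0 τ z ∧ M2 τ (z + 1) = -M2 τ z ∧ M4 τ (z + 1) = -M4 τ z := by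
  have h : ∀ n, thetaD n τ (2 * (z + 1)) = thetaD n τ (2 * z) := fun n => by
    rw [show 2 * (z + 1) = 2 * z + 1 + 1 by ring, thetaD_add_one, thetaD_add_one, neg_neg]
  simp only [M0, M2, M4, h, thetaD_add_one]
  refine ⟨?_, ?_, ?_⟩ <;> ring

lemma M_neg (τ z : ℂ) :
    M0 τ (-z) = M0 τ z ∧ M2 τ (-z) = M2 τ z ∧ M4 τ (-z) = M4 τ z := by
  have h : ∀ n, thetaD n τ (2 * -z) = (-1) ^ (n + 1) * thetaD n τ (2 * z) := fun n => by
    rw [mul_neg, thetaD_neg]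
  simp only [M0, M2, M4, h, thetaD_neg]
  refine ⟨?_, ?_, ?_⟩ <;> ring

lemma thetaD_even_zero (τ : ℂ) {n : ℕ} (hn : Even n) : thetaD n τ 0 = 0 := by
  have h := thetaD_neg n τ 0
  rw [neg_zero, pow_succ, hn.neg_one_pow] at h
  have : 2 * thetaD n τ 0 = 0 := by linear_combination h
  simpa using this

lemma hasDerivAt_thetaD_mul (i j : ℕ) {τ : ℂ} (hτ : 0 < τ.im) (z : ℂ) :
    HasDerivAt (fun z => thetaD i τ z * thetaD j τ (2 * z))
      (2 * π * I * (thetaD (i + 1) τ z * thetaD j τ (2 * z)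
        + 2 * (thetaD i τ z * thetaD (j + 1) τ (2 * z)))) z := by
  have h1 := hasDerivAt_thetaD_z i hτ z
  have h2 : HasDerivAt (fun z => thetaD j τ (2 * z))
      (2 * π * I * thetaD (j + 1) τ (2 * z) * (2 * 1)) z :=
    HasDerivAt.comp z (hasDerivAt_thetaD_z j hτ (2 * z)) ((hasDerivAt_id z).const_mul 2)
  exact (h1.mul h2).congr_deriv (by ring)

/-- `(2πi)⁻¹ ∂_z M0`. -/
def M0' (τ z : ℂ) : ℂ :=
  thetaD 1 τ z * thetaD 0 τ (2 * z) + 2 * (thetaD 0 τ z * thetaD 1 τ (2 * z))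

/-- `(2πi)⁻¹ ∂_z M2`. -/
def M2' (τ z : ℂ) : ℂ :=
  4 * (thetaD 3 τ z * thetaD 0 τ (2 * z)) + 4 * (thetaD 2 τ z * thetaD 1 τ (2 * z))
    - 7 * (thetaD 1 τ z * thetaD 2 τ (2 * z)) + 2 * (thetaD 0 τ z * thetaD 3 τ (2 * z))

/-- `(2πi)⁻¹ ∂_z M4`. -/
def M4' (τ z : ℂ) : ℂ :=
  16 * (thetaD 5 τ z * thetaD 0 τ (2 * z)) - 40 * (thetaD 3 τ z * thetaD 2 τ (2 * z))
    + 40 * (thetaD 2 τ z * thetaD 3 τ (2 * z)) - 15 * (thetaD 1 τ z * thetaD 4 τ (2 * z))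
    + 2 * (thetaD 0 τ z * thetaD 5 τ (2 * z))

lemma hasDerivAt_M0 {τ : ℂ} (hτ : 0 < τ.im) (z : ℂ) :
    HasDerivAt (M0 τ) (2 * π * I * M0' τ z) z :=
  hasDerivAt_thetaD_mul 0 0 hτ z

lemma hasDerivAt_M2 {τ : ℂ} (hτ : 0 < τ.im) (z : ℂ) :
    HasDerivAt (M2 τ) (2 * π * I * M2' τ z) z :=
  (((hasDerivAt_thetaD_mul 2 0 hτ z).const_mul 4).sub
    ((hasDerivAt_thetaD_mul 1 1 hτ z).const_mul 4)).add (hasDerivAt_thetaD_mul 0 2 hτ z)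
    |>.congr_deriv (by simp only [M2']; ring)

lemma hasDerivAt_M4 {τ : ℂ} (hτ : 0 < τ.im) (z : ℂ) :
    HasDerivAt (M4 τ) (2 * π * I * M4' τ z) z :=
  (((((hasDerivAt_thetaD_mul 4 0 hτ z).const_mul 16).sub
    ((hasDerivAt_thetaD_mul 3 1 hτ z).const_mul 32)).add
    ((hasDerivAt_thetaD_mul 2 2 hτ z).const_mul 24)).sub
    ((hasDerivAt_thetaD_mul 1 3 hτ z).const_mul 8)).add (hasDerivAt_thetaD_mul 0 4 hτ z)
    |>.congr_deriv (by simp only [M4']; ring)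

lemma hasDerivAt_M0' {τ : ℂ} (hτ : 0 < τ.im) (z : ℂ) :
    HasDerivAt (M0' τ) (2 * π * I * (thetaD 2 τ z * thetaD 0 τ (2 * z)
    + 4 * (thetaD 1 τ z * thetaD 1 τ (2 * z)) + 4 * (thetaD 0 τ z * thetaD 2 τ (2 * z)))) z :=
  ((hasDerivAt_thetaD_mul 1 0 hτ z).add ((hasDerivAt_thetaD_mul 0 1 hτ z).const_mul 2))
    |>.congr_deriv (by ring)

lemma hasDerivAt_M2' {τ : ℂ} (hτ : 0 < τ.im) (z : ℂ) :
    HasDerivAt (M2' τ) (2 * π * I * (4 * (thetaD 4 τ z * thetaD 0 τ (2 * z))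
    + 12 * (thetaD 3 τ z * thetaD 1 τ (2 * z)) + (thetaD 2 τ z * thetaD 2 τ (2 * z))
    - 12 * (thetaD 1 τ z * thetaD 3 τ (2 * z)) + 4 * (thetaD 0 τ z * thetaD 4 τ (2 * z)))) z :=
  (((((hasDerivAt_thetaD_mul 3 0 hτ z).const_mul 4).add
    ((hasDerivAt_thetaD_mul 2 1 hτ z).const_mul 4)).sub
    ((hasDerivAt_thetaD_mul 1 2 hτ z).const_mul 7)).add
    ((hasDerivAt_thetaD_mul 0 3 hτ z).const_mul 2))
    |>.congr_deriv (by ring)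

lemma hasDerivAt_M4' {τ : ℂ} (hτ : 0 < τ.im) (z : ℂ) :
    HasDerivAt (M4' τ) (2 * π * I * (16 * (thetaD 6 τ z * thetaD 0 τ (2 * z))
    + 32 * (thetaD 5 τ z * thetaD 1 τ (2 * z)) - 40 * (thetaD 4 τ z * thetaD 2 τ (2 * z))
    - 40 * (thetaD 3 τ z * thetaD 3 τ (2 * z)) + 65 * (thetaD 2 τ z * thetaD 4 τ (2 * z))
    - 28 * (thetaD 1 τ z * thetaD 5 τ (2 * z)) + 4 * (thetaD 0 τ z * thetaD 6 τ (2 * z)))) z :=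
  ((((((hasDerivAt_thetaD_mul 5 0 hτ z).const_mul 16).sub
    ((hasDerivAt_thetaD_mul 3 2 hτ z).const_mul 40)).add
    ((hasDerivAt_thetaD_mul 2 3 hτ z).const_mul 40)).sub
    ((hasDerivAt_thetaD_mul 1 4 hτ z).const_mul 15)).add
    ((hasDerivAt_thetaD_mul 0 5 hτ z).const_mul 2))
    |>.congr_deriv (by ring)

/-- The equation reduced to the Taylor coefficients of `ϑ` at `z = 0`: it follows from the values of
the third and fifth coefficients in terms of the first. -/
lemma combination_eq_zero {τ : ℂ} (hτ : 0 < τ.im) {E E' : ℂ}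
    (h3 : thetaD 3 τ 0 = E / 4 * thetaD 1 τ 0)
    (h5 : thetaD 5 τ 0 = (5 / 48 * E ^ 2 - E' / 24) * thetaD 1 τ 0) (z : ℂ) :
    36 / 25 * M4 τ z - 18 / 5 * E * M2 τ z + (3 / 4 * E ^ 2 + 3 / 50 * E') * M0 τ z = 0 := by
  have e0 := thetaD_even_zero τ (n := 0) (by decide)
  have e2 := thetaD_even_zero τ (n := 2) (by decide)
  have e4 := thetaD_even_zero τ (n := 4) (by decide)
  have e6 := thetaD_even_zero τ (n := 6) (by decide)
  refine eq_zero_of_index_five_halves hτ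
    (f := fun z => 36 / 25 * M4 τ z - 18 / 5 * E * M2 τ z
      + (3 / 4 * E ^ 2 + 3 / 50 * E') * M0 τ z)
    (f' := fun z => 36 / 25 * (2 * π * I * M4' τ z) - 18 / 5 * E * (2 * π * I * M2' τ z)
      + (3 / 4 * E ^ 2 + 3 / 50 * E') * (2 * π * I * M0' τ z))
    (fun z => (((hasDerivAt_M4 hτ z).const_mul _).sub ((hasDerivAt_M2 hτ z).const_mul _)).add
      ((hasDerivAt_M0 hτ z).const_mul _)) ?_ ?_ ?_ ?_ ?_ z
  · refine ((((((hasDerivAt_M4' hτ 0).const_mul (2 * π * I)).const_mul (36 / 25)).sub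
      (((hasDerivAt_M2' hτ 0).const_mul (2 * π * I)).const_mul (18 / 5 * E))).add
      (((hasDerivAt_M0' hτ 0).const_mul (2 * π * I)).const_mul
        (3 / 4 * E ^ 2 + 3 / 50 * E')))).congr_deriv ?_
    simp only [mul_zero, e0, e2, e4, e6, h3, h5]
    ring
  · simp only [M0, M2, M4, mul_zero, e0, e2, e4, h3]
    ring
  · intro z
    obtain ⟨a, b, c⟩ := M_neg τ z
    simp only [a, b, c]
  · intro z
    obtain ⟨a, b, c⟩ := M_add_one τ z
    simp only [a, b, c]
    ring
  · intro z
    obtain ⟨a, b, c⟩ := M_add_tau hτ z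
    simp only [a, b, c]
    ring

/-! ### Eisenstein series and Ramanujan's identity for the derivative of `E₂` -/

section Eisenstein

open UpperHalfPlane hiding I
open ModularForm EisensteinSeries Derivative
open scoped MatrixGroups Manifold Topology

lemma sigmaD_eq (k n : ℕ) : sigmaD k n = ArithmeticFunction.sigma k n := by
  rw [sigmaD, ArithmeticFunction.sigma_apply]

lemma Eis2_eq (z : ℍ) : Eis2 z = E2 z := by
  rw [E2_eq_tsum_cexp, Eis2]
  rw [tsum_pnat_eq_tsum_succ
    (f := fun n : ℕ => (ArithmeticFunction.sigma 1 n : ℂ) * cexp (2 * π * I * z) ^ n)]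
  congr 3
  ext n
  rw [sigmaD_eq, ← Complex.exp_nat_mul]
  congr 2
  push_cast
  ring

lemma Eis4_eq (z : ℍ) : Eis4 z = E₄ z := by
  have hB : bernoulli 4 = -1 / 30 := by decide +kernel
  have hq := EisensteinSeries.q_expansion_bernoulli (k := 4) (by norm_num) ⟨2, rfl⟩ z
  refine Eq.trans ?_ hq.symm
  rw [Eis4, hB]
  simp only [zpow_natCast]
  rw [tsum_pnat_eq_tsum_succ
    (f := fun n : ℕ => (ArithmeticFunction.sigma (4 - 1) n : ℂ) * cexp (2 * π * I * z) ^ n)]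
  rw [sub_eq_add_neg, ← neg_mul]
  congr 1
  congr 1
  · norm_num
  · congr 1
    ext n
    rw [sigmaD_eq, ← Complex.exp_nat_mul]
    congr 2
    push_cast
    ring

lemma summable_sigma (k : ℕ) (z : ℍ) :
    Summable fun n : ℕ => (sigmaD k (n + 1) : ℂ) * cexp (2 * π * I * z * (n + 1)) := by
  have := (summable_nat_add_iff 1).2 (summable_sigma_mul_cexp_pow (k := k + 1) (by simp) z)
  refine this.congr fun n => ?_
  rw [sigmaD_eq, ← Complex.exp_nat_mul]
  congr 2
  push_cast
  ring

lemma isZeroAtImInfty_sigma (k : ℕ) : IsZeroAtImInfty fun z : ℍ =>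
    ∑' n : ℕ, (sigmaD k (n + 1) : ℂ) * cexp (2 * π * I * z * (n + 1)) := by
  have hs := (summable_sigma k UpperHalfPlane.I).norm
  set C := ∑' n : ℕ, ‖(sigmaD k (n + 1) : ℂ) * cexp (2 * π * I * UpperHalfPlane.I * (n + 1))‖
  have hb : ∀ z : ℍ, 1 ≤ z.im →
      ‖∑' n : ℕ, (sigmaD k (n + 1) : ℂ) * cexp (2 * π * I * z * (n + 1))‖
        ≤ rexp (2 * π * (1 - z.im)) * C := by
    intro z hz
    rw [← tsum_mul_left]
    refine tsum_of_norm_bounded (hs.mul_left _).hasSum fun n => ?_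
    rw [norm_mul, norm_mul, mul_left_comm]
    refine mul_le_mul_of_nonneg_left ?_ (norm_nonneg _)
    rw [Complex.norm_exp, Complex.norm_exp, ← Real.exp_add]
    apply Real.exp_le_exp.2
    have e1 : (2 * π * I * z * (n + 1)).re = -(2 * π * z.im * (n + 1)) := by
      simp [mul_assoc]
    have e2 : (2 * π * I * UpperHalfPlane.I * (n + 1)).re = -(2 * π * (n + 1)) := by
      simp [mul_assoc]
    rw [e1, e2]
    have h1 : 0 ≤ 2 * π * ((z.im - 1) * n) := by
      have : 0 ≤ z.im - 1 := by linarith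
      positivity
    nlinarith
  have ht : Filter.Tendsto (fun z : ℍ => rexp (2 * π * (1 - z.im)) * C) atImInfty (𝓝 0) := by
    have h1 : Filter.Tendsto (fun z : ℍ => 2 * π * (1 - z.im)) atImInfty Filter.atBot := by
      refine Filter.Tendsto.const_mul_atBot (by positivity) ?_
      exact Filter.tendsto_atBot_add_const_left _ 1
        (Filter.tendsto_neg_atTop_atBot.comp Filter.tendsto_comap)
    simpa using (Real.tendsto_exp_atBot.comp h1).mul_const C
  refine squeeze_zero_norm' ?_ ht
  rw [Filter.eventually_iff, atImInfty_mem]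
  exact ⟨1, hb⟩

lemma tendsto_E2 : Filter.Tendsto E2 atImInfty (𝓝 1) := by
  have h := ((isZeroAtImInfty_sigma 1).const_mul 24).const_sub 1
  simp only [mul_zero, sub_zero] at h
  exact h.congr fun z => by rw [← Eis2_eq, Eis2]

lemma tendsto_E4 : Filter.Tendsto E₄ atImInfty (𝓝 1) := by
  have h := ((isZeroAtImInfty_sigma 3).const_mul 240).const_add 1
  simp only [mul_zero, add_zero] at h
  exact h.congr fun z => by rw [← Eis4_eq, Eis4]

/-- By the Cauchy estimate on discs of radius one, the derivative of `E₂` vanishes at `i∞`. -/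
lemma isZeroAtImInfty_deriv_E2 : IsZeroAtImInfty (D E2) := by
  have hE : IsZeroAtImInfty fun z => E2 z - 1 := by
    have h := tendsto_E2.sub_const 1
    rw [sub_self] at h
    exact h
  rw [isZeroAtImInfty_iff] at hE ⊢
  intro ε hε
  obtain ⟨A, hA⟩ := hE (ε * (2 * π)) (by positivity)
  refine ⟨max A 1 + 1, fun z hz => ?_⟩
  have hd := UpperHalfPlane.mdifferentiable_iff.1 E2_mdifferentiable
  have him : ∀ w ∈ Metric.closedBall (z : ℂ) 1, max A 1 ≤ w.im := by
    intro w hw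
    have h1 : |(w - z).im| ≤ 1 :=
      (Complex.abs_im_le_norm _).trans (by simpa [dist_eq_norm] using hw)
    rw [Complex.sub_im] at h1
    have := (abs_le.1 h1).1
    have h2 : (z : ℂ).im = z.im := rfl
    linarith
  have hpos : ∀ w ∈ Metric.closedBall (z : ℂ) 1, 0 < w.im := fun w hw =>
    lt_of_lt_of_le one_pos ((le_max_right A 1).trans (him w hw))
  have hdo : DifferentiableOn ℂ (fun w => (E2 ∘ ofComplex) w - 1) (Metric.closedBall (z : ℂ) 1) :=
    (hd.mono hpos).sub_const 1
  have hc := Complex.norm_deriv_le_of_forall_mem_sphere_norm_le (c := (z : ℂ)) (R := 1)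
    (f := fun w => (E2 ∘ ofComplex) w - 1) (C := ε * (2 * π)) one_pos
    (hdo.diffContOnCl_ball Set.Subset.rfl) (fun w hw => by
      have hw' := Metric.sphere_subset_closedBall hw
      simp only [Function.comp_apply, ofComplex_apply_of_im_pos (hpos w hw')]
      exact hA _ ((le_max_left A 1).trans (him w hw')))
  rw [deriv_sub_const, div_one] at hc
  rw [normalizedDerivOfComplex, norm_mul, norm_inv]
  have hn : ‖(2 * π * I : ℂ)‖ = 2 * π := by simp [abs_of_pos Real.pi_pos]
  rw [hn]
  calc (2 * π)⁻¹ * ‖deriv (E2 ∘ ofComplex) z‖ ≤ (2 * π)⁻¹ * (ε * (2 * π)) := by gcongr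
    _ = ε := by field_simp

lemma tendsto_serre_E2 :
    Filter.Tendsto (serreDerivative 1 E2) atImInfty (𝓝 (-(1 / 12))) := by
  have h := Filter.Tendsto.sub isZeroAtImInfty_deriv_E2
    ((tendsto_E2.mul tendsto_E2).const_mul (12⁻¹ : ℂ))
  refine (h.congr fun z => ?_).trans (by norm_num)
  rw [serreDerivative_apply]
  ring

/-- `serreDerivative 1 E2` is `D E₂ - E₂²/12`; the parameter is `1` because `E₂` itself carries the
quasi-modular correction. -/
lemma serre_E2_slash_apply (γ : SL(2, ℤ)) (z : ℍ) :
    (serreDerivative 1 E2 ∣[(4 : ℤ)] γ) z =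
      (D E2 ∣[(4 : ℤ)] γ) z - 12⁻¹ * (E2 ∣[(2 : ℤ)] γ) z ^ 2 := by
  simp only [ModularForm.SL_slash_apply, serreDerivative_apply, mul_pow]
  have : (denom γ z ^ (-2 : ℤ)) ^ 2 = denom γ z ^ (-4 : ℤ) := by
    rw [← zpow_natCast, ← zpow_mul]; norm_num
  rw [this]
  ring

lemma deriv_E2_slash (γ : SL(2, ℤ)) (z : ℍ) : (D E2 ∣[(4 : ℤ)] γ) z =
    D (E2 ∣[(2 : ℤ)] γ) z + 2 * (2 * π * I)⁻¹ * (γ 1 0 / denom γ z) * (E2 ∣[(2 : ℤ)] γ) z := by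
  have h := congrFun (normalizedDerivOfComplex_SL_slash (k := 2) (γ := γ) E2_mdifferentiable) z
  rw [h]
  simp

lemma serre_E2_T : serreDerivative 1 E2 ∣[(4 : ℤ)] ModularGroup.T = serreDerivative 1 E2 := by
  ext z
  rw [serre_E2_slash_apply, deriv_E2_slash, E2_slash_action, D2_T, smul_zero, sub_zero,
    serreDerivative_apply]
  simp [ModularGroup.T]
  ring

lemma hasDerivAt_D2_S (z : ℍ) :
    HasDerivAt ((D2 ModularGroup.S) ∘ ofComplex) (-(2 * π * I) / (z : ℂ) ^ 2) z := by
  have h1 : HasDerivAt (fun w : ℂ => 2 * π * I * w⁻¹) (2 * π * I * -((z : ℂ) ^ 2)⁻¹) z :=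
    (hasDerivAt_inv z.ne_zero).const_mul _
  refine (h1.congr_deriv (by ring)).congr_of_eventuallyEq ?_
  filter_upwards [isOpen_upperHalfPlaneSet.mem_nhds z.2] with w hw
  rw [Function.comp_apply, ofComplex_apply_of_im_pos hw, D2_S]
  rw [div_eq_mul_inv]

lemma serre_E2_S : serreDerivative 1 E2 ∣[(4 : ℤ)] ModularGroup.S = serreDerivative 1 E2 := by
  ext z
  have hz : (z : ℂ) ≠ 0 := z.ne_zero
  have hpi : (π : ℂ) ≠ 0 := by exact_mod_cast Real.pi_ne_zero
  have hD : D (E2 - (1 / (2 * riemannZeta 2)) • D2 ModularGroup.S) z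
      = D E2 z - (1 / (2 * riemannZeta 2)) * (-1 / (z : ℂ) ^ 2) := by
    have hE := (UpperHalfPlane.mdifferentiable_iff.1 E2_mdifferentiable).differentiableAt
      (isOpen_upperHalfPlaneSet.mem_nhds z.2)
    have h2 := hE.hasDerivAt.sub ((hasDerivAt_D2_S z).const_mul (1 / (2 * riemannZeta 2)))
    have h3 : HasDerivAt ((E2 - (1 / (2 * riemannZeta 2)) • D2 ModularGroup.S) ∘ ofComplex) _ z :=
      h2
    rw [normalizedDerivOfComplex, h3.deriv, normalizedDerivOfComplex]
    field_simp
  rw [serre_E2_slash_apply, deriv_E2_slash, E2_slash_action, hD, serreDerivative_apply,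
    Pi.sub_apply, Pi.smul_apply, D2_S, riemannZeta_two, smul_eq_mul, ModularGroup.denom_S]
  have hS : ((ModularGroup.S 1 0 : ℤ) : ℂ) = 1 := by simp [ModularGroup.S]
  rw [hS]
  field_simp
  ring_nf
  simp only [Complex.I_pow_three, Complex.I_sq]
  ring

/-- `D E₂ - E₂²/12` as a modular form of weight four and level one. -/
def ramanujanForm : ModularForm 𝒮ℒ 4 where
  toFun := serreDerivative 1 E2
  slash_action_eq' A hA := by
    obtain ⟨A, rfl⟩ := hA
    exact SlashInvariantForm.slash_action_generators_SL2Z serre_E2_S serre_E2_T A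
  holo' := serreDerivative_mdifferentiable 1 E2_mdifferentiable
  bdd_at_cusps' hc := by
    rw [Subgroup.IsArithmetic.isCusp_iff_isCusp_SL2Z] at hc
    rw [OnePoint.isBoundedAt_iff_forall_SL2Z hc]
    intro γ _
    rw [SlashInvariantForm.slash_action_generators_SL2Z serre_E2_S serre_E2_T]
    exact tendsto_serre_E2.isBigO_one ℝ

/-- Ramanujan's identity `D E₂ = (E₂² - E₄)/12`. -/
lemma ramanujan (z : ℍ) : D E2 z = (E2 z ^ 2 - E₄ z) / 12 := by
  have hne : (E₄ : ModularForm 𝒮ℒ 4) ≠ 0 := E_ne_zero _ ⟨2, rfl⟩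
  obtain ⟨c, hc⟩ := (finrank_eq_one_iff_of_nonzero' (E₄ : ModularForm 𝒮ℒ 4) hne).1
    (Module.finrank_eq_of_rank_eq levelOne_weight_four_rank_one) ramanujanForm
  have hc' : ∀ z, c * E₄ z = serreDerivative 1 E2 z := fun z =>
    congrArg (fun f : ModularForm 𝒮ℒ 4 => f z) hc
  have hlim := (tendsto_E4.const_mul c).congr hc'
  have h12 := tendsto_nhds_unique hlim tendsto_serre_E2
  have h := hc' z
  rw [serreDerivative_apply] at h
  linear_combination -h + E₄ z * h12

/-- Ramanujan's identity for the derivative of the series `Eis2`. -/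
lemma hasDerivAt_Eis2 {τ : ℂ} (hτ : 0 < τ.im) :
    HasDerivAt Eis2 (2 * π * I * ((Eis2 τ ^ 2 - Eis4 τ) / 12)) τ := by
  have h := ramanujan ⟨τ, hτ⟩
  have hE := (UpperHalfPlane.mdifferentiable_iff.1 E2_mdifferentiable).differentiableAt
    (isOpen_upperHalfPlaneSet.mem_nhds hτ)
  have h1 := hE.hasDerivAt
  rw [normalizedDerivOfComplex, inv_mul_eq_iff_eq_mul₀ Complex.two_pi_I_ne_zero, ← Eis2_eq,
    ← Eis4_eq] at h
  refine (h1.congr_deriv h).congr_of_eventuallyEq ?_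
  filter_upwards [isOpen_upperHalfPlaneSet.mem_nhds hτ] with w hw
  rw [Function.comp_apply, ofComplex_apply_of_im_pos hw, ← Eis2_eq]


end Eisenstein

/-! ### Theta constants

The eighth power of `∑ (-1)^k (k+1/2) e^{πiτ(k+1/2)²}` is a cusp form of weight twelve, hence a
multiple of `Δ = η²⁴`. -/

section ThetaConstants

open UpperHalfPlane hiding I
open ModularForm EisensteinSeries Derivative
open scoped MatrixGroups Manifold Topology

lemma thetaD_one_eq_jacobi {τ : ℂ} (hτ : 0 < τ.im) :
    2 * π * I * thetaD 1 τ 0 = cexp (π * I * τ / 4) * jacobiTheta₂' (1 / 2 + τ / 2) τ := by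
  have hterm (k : ℤ) : cexp (π * I * τ / 4) * jacobiTheta₂_term k (1 / 2 + τ / 2) τ
      = thetaTerm 0 τ 0 k := by
    have hk : cexp (π * I * k) = (-1) ^ k := by
      rw [← Complex.exp_pi_mul_I, ← Complex.exp_int_mul]
      congr 1
      ring
    rw [jacobiTheta₂_term, thetaTerm, ← hk, pow_zero, mul_one, ← Complex.exp_add,
      ← Complex.exp_add]
    congr 1
    ring
  have h0 : ∑' k, thetaTerm 0 τ 0 k = 0 := thetaD_even_zero τ (by decide)
  have h2 : ∀ k : ℤ, cexp (π * I * τ / 4) * jacobiTheta₂'_term k (1 / 2 + τ / 2) τ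
      = 2 * π * I * thetaTerm 1 τ 0 k - π * I * thetaTerm 0 τ 0 k := by
    intro k
    rw [jacobiTheta₂'_term, mul_left_comm, hterm]
    simp only [thetaTerm]
    ring
  rw [jacobiTheta₂', ← tsum_mul_left, tsum_congr h2,
    ((summable_thetaTerm 1 hτ 0).mul_left _).tsum_sub ((summable_thetaTerm 0 hτ 0).mul_left _),
    tsum_mul_left, tsum_mul_left, h0, mul_zero, sub_zero]
  rfl

/-- The quasi-periodicity and evenness of `jacobiTheta₂` identify its value at `(1 + τ)/2` with the
negative of that value. -/
lemma jacobiTheta₂_half_zero (τ : ℂ) : jacobiTheta₂ (1 / 2 + τ / 2) τ = 0 := by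
  have h1 := jacobiTheta₂_add_left' (1 / 2 - τ / 2) τ
  have h2 := jacobiTheta₂_add_left (-(1 / 2 + τ / 2)) τ
  rw [jacobiTheta₂_neg_left] at h2
  have e1 : (1 : ℂ) / 2 - τ / 2 + τ = 1 / 2 + τ / 2 := by ring
  have e2 : -((1 : ℂ) / 2 + τ / 2) + 1 = 1 / 2 - τ / 2 := by ring
  have e3 : -(π : ℂ) * I * (τ + 2 * (1 / 2 - τ / 2)) = -(π * I) := by ring
  rw [e1, e3, Complex.exp_neg, Complex.exp_pi_mul_I] at h1
  rw [e2] at h2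
  rw [h2] at h1
  linear_combination h1 / 2

/-- The modular inversion `T_1(-1/τ)⁸ = τ¹² T_1(τ)⁸`, from the functional equation of the derivative
of `jacobiTheta₂` at the zero `(1 + τ)/2`; the eighth power removes the root of unity and the square
root. -/
lemma thetaD_one_inv {τ : ℂ} (hτ : 0 < τ.im) :
    thetaD 1 (-1 / τ) 0 ^ 8 = τ ^ 12 * thetaD 1 τ 0 ^ 8 := by
  have hτ0 : τ ≠ 0 := by rintro rfl; simp at hτ
  have hτ1 : 0 < (-1 / τ).im := by
    have := UpperHalfPlane.im_inv_neg_coe_pos ⟨τ, hτ⟩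
    rw [neg_div, one_div, ← inv_neg]
    exact this
  have hA := thetaD_one_eq_jacobi hτ
  have hB := thetaD_one_eq_jacobi hτ1
  have hF := jacobiTheta₂'_functional_equation (1 / 2 + τ / 2) τ
  have e1 : (1 / 2 + τ / 2) / τ = -(1 / 2 + -1 / τ / 2) + 1 := by field_simp; ring
  rw [e1, jacobiTheta₂'_add_left, jacobiTheta₂_add_left, jacobiTheta₂'_neg_left,
    jacobiTheta₂_neg_left, jacobiTheta₂_half_zero] at hF
  have e2 : cexp (-π * I * (1 / 2 + τ / 2) ^ 2 / τ) * cexp (π * I * τ / 4)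
      = -I * cexp (π * I * (-1 / τ) / 4) := by
    have h3 : cexp (-(π / 2 * I)) = -I := by
      rw [Complex.exp_neg, Complex.exp_pi_div_two_mul_I, Complex.inv_I]
    rw [← h3, ← Complex.exp_add, ← Complex.exp_add]
    congr 1
    field_simp
    ring
  set r := (-I * τ) ^ (1 / 2 : ℂ) with hr
  have hr2 : r ^ 2 = -I * τ := by
    rw [hr, ← Complex.cpow_nat_mul]
    simp
  have hr0 : r ≠ 0 := by
    intro h
    rw [h] at hr2
    simp [hτ0] at hr2
  have hpi := Complex.two_pi_I_ne_zero
  have key : thetaD 1 (-1 / τ) 0 * I = r * τ * thetaD 1 τ 0 := by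
    apply mul_left_cancel₀ hpi
    have h4 : 2 * π * I * (r * τ * thetaD 1 τ 0) = r * τ * (2 * π * I * thetaD 1 τ 0) := by ring
    rw [h4, hA, ← mul_assoc, hB, hF]
    have h5 : r * τ * (cexp (π * I * τ / 4) *
        (1 / r * cexp (-π * I * (1 / 2 + τ / 2) ^ 2 / τ) / τ *
          (-jacobiTheta₂' (1 / 2 + -1 / τ / 2) (-1 / τ) - 2 * π * I * (1 / 2 + τ / 2) * 0)))
        = (cexp (-π * I * (1 / 2 + τ / 2) ^ 2 / τ) * cexp (π * I * τ / 4)) *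
          -jacobiTheta₂' (1 / 2 + -1 / τ / 2) (-1 / τ) := by
      field_simp
      ring
    rw [mul_assoc r τ] at h5 ⊢
    rw [h5, e2]
    ring
  have h8 : (thetaD 1 (-1 / τ) 0 * I) ^ 8 = (r * τ * thetaD 1 τ 0) ^ 8 := by rw [key]
  have hI8 : I ^ 8 = 1 := by
    rw [show (8 : ℕ) = 4 * 2 from rfl, pow_mul, Complex.I_pow_four, one_pow]
  have hr8 : r ^ 8 = τ ^ 4 := by
    rw [show (8 : ℕ) = 2 * 4 from rfl, pow_mul, hr2, mul_pow, neg_pow, Complex.I_pow_four]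
    ring
  rw [mul_pow, mul_pow, mul_pow, hI8, hr8] at h8
  linear_combination h8

lemma thetaD_one_add_one (τ : ℂ) : thetaD 1 (τ + 1) 0 ^ 8 = thetaD 1 τ 0 ^ 8 := by
  have h : thetaD 1 (τ + 1) 0 = cexp (π * I / 4) * thetaD 1 τ 0 := by
    rw [thetaD, thetaD, ← tsum_mul_left]
    refine tsum_congr fun k => ?_
    rw [mul_left_comm, ← Complex.exp_add]
    congr 1
    obtain ⟨m, hm⟩ := Int.even_mul_succ_self k
    have hm' : (k : ℂ) * (k + 1) = m + m := by exact_mod_cast hm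
    rw [Complex.exp_eq_exp_iff_exists_int]
    refine ⟨m, ?_⟩
    linear_combination π * I * hm'
  rw [h, mul_pow, ← Complex.exp_nat_mul]
  have : ((8 : ℕ) : ℂ) * (π * I / 4) = 2 * π * I := by push_cast; ring
  rw [this, Complex.exp_two_pi_mul_I, one_mul]

lemma isZeroAtImInfty_thetaD_one : IsZeroAtImInfty fun z : ℍ => thetaD 1 z 0 := by
  have hs := (summable_thetaTerm 1 (τ := I) (by simp) 0).norm
  set C := ∑' k : ℤ, ‖thetaTerm 1 I 0 k‖
  have hb : ∀ z : ℍ, 1 ≤ z.im → ‖thetaD 1 z 0‖ ≤ rexp (π / 4 * (1 - z.im)) * C := by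
    intro z hz
    rw [← tsum_mul_left]
    refine tsum_of_norm_bounded (hs.mul_left _).hasSum fun k => ?_
    rw [thetaTerm, norm_mul, norm_mul (_ * _) (cexp _), mul_left_comm]
    refine mul_le_mul_of_nonneg_left ?_ (norm_nonneg _)
    rw [Complex.norm_exp, Complex.norm_exp, ← Real.exp_add]
    apply Real.exp_le_exp.2
    have e (w : ℂ) : (π * I * w * ((k : ℂ) + 1 / 2) ^ 2
        + 2 * π * I * 0 * ((k : ℂ) + 1 / 2)).re = -(π * w.im * ((k : ℝ) + 1 / 2) ^ 2) := by
      have : (π * I * w * ((k : ℂ) + 1 / 2) ^ 2 + 2 * π * I * 0 * ((k : ℂ) + 1 / 2))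
          = ((π * ((k : ℝ) + 1 / 2) ^ 2 : ℝ) : ℂ) * (I * w) := by
        push_cast; ring
      rw [this, Complex.re_ofReal_mul, Complex.I_mul_re]
      ring
    rw [e, e, Complex.I_im, UpperHalfPlane.coe_im]
    have hk : (1 : ℝ) / 4 ≤ ((k : ℝ) + 1 / 2) ^ 2 := by
      have : (0 : ℝ) ≤ (k : ℝ) * (k + 1) := by
        have : 0 ≤ k * (k + 1) := by
          rcases le_or_gt 0 k with h | h
          · positivity
          · exact mul_nonneg_of_nonpos_of_nonpos h.le (by omega)
        exact_mod_cast this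
      nlinarith
    have h1 : 0 ≤ π * ((z.im - 1) * (((k : ℝ) + 1 / 2) ^ 2 - 1 / 4)) :=
      mul_nonneg Real.pi_pos.le (mul_nonneg (by linarith) (by linarith))
    nlinarith
  have ht : Filter.Tendsto (fun z : ℍ => rexp (π / 4 * (1 - z.im)) * C) atImInfty (𝓝 0) := by
    have h1 : Filter.Tendsto (fun z : ℍ => π / 4 * (1 - z.im)) atImInfty Filter.atBot := by
      refine Filter.Tendsto.const_mul_atBot (by positivity) ?_
      exact Filter.tendsto_atBot_add_const_left _ 1
        (Filter.tendsto_neg_atTop_atBot.comp Filter.tendsto_comap)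
    simpa using (Real.tendsto_exp_atBot.comp h1).mul_const C
  refine squeeze_zero_norm' ?_ ht
  rw [Filter.eventually_iff, atImInfty_mem]
  exact ⟨1, hb⟩

/-- The eighth power of the theta constant `thetaD 1 · 0`, as a function on `ℍ`. -/
def thetaPow (z : ℍ) : ℂ := thetaD 1 z 0 ^ 8

lemma thetaPow_S : thetaPow ∣[(12 : ℤ)] ModularGroup.S = thetaPow := by
  ext z
  rw [SL_slash_apply, ModularGroup.denom_S, modular_S_smul, thetaPow, thetaPow]
  have h : ((⟨(-(z : ℂ))⁻¹, z.im_inv_neg_coe_pos⟩ : ℍ) : ℂ) = -1 / z := by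
    change (-(z : ℂ))⁻¹ = _
    rw [inv_neg, neg_div, one_div]
  rw [h, thetaD_one_inv z.2, mul_comm, ← mul_assoc]
  have hz : (z : ℂ) ≠ 0 := z.ne_zero
  have h12 : (z : ℂ) ^ (-12 : ℤ) * (z : ℂ) ^ 12 = 1 := by
    rw [← zpow_natCast, ← zpow_add₀ hz]
    norm_num
  rw [h12, one_mul]

lemma thetaPow_T : thetaPow ∣[(12 : ℤ)] ModularGroup.T = thetaPow := by
  ext z
  rw [SL_slash_apply, modular_T_smul, thetaPow, thetaPow]
  have h : (((1 : ℝ) +ᵥ z : ℍ) : ℂ) = z + 1 := by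
    rw [UpperHalfPlane.coe_vadd]
    push_cast
    ring
  rw [h, thetaD_one_add_one]
  have hd : denom (ModularGroup.T : SL(2, ℤ)) z = 1 := by
    rw [ModularGroup.denom_apply]
    simp [ModularGroup.T]
  rw [hd, one_zpow, mul_one]

/-- The eighth power of `thetaD 1 · 0` as a cusp form of weight twelve and level one. -/
def thetaCusp : CuspForm 𝒮ℒ 12 where
  toFun := thetaPow
  slash_action_eq' A hA := by
    obtain ⟨A, rfl⟩ := hA
    exact SlashInvariantForm.slash_action_generators_SL2Z thetaPow_S thetaPow_T A
  holo' := by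
    rw [UpperHalfPlane.mdifferentiable_iff]
    refine .congr (fun z hz ↦
      ((hasDerivAt_thetaD_tau 1 hz 0).differentiableAt.pow 8).differentiableWithinAt) fun z hz ↦ ?_
    simp [thetaPow, ofComplex_apply_of_im_pos hz]
  zero_at_cusps' hc := by
    rw [Subgroup.IsArithmetic.isCusp_iff_isCusp_SL2Z] at hc
    rw [OnePoint.isZeroAt_iff_forall_SL2Z hc]
    intro γ _
    rw [SlashInvariantForm.slash_action_generators_SL2Z thetaPow_S thetaPow_T]
    have h := Filter.Tendsto.pow isZeroAtImInfty_thetaD_one 8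
    rw [zero_pow (by norm_num)] at h
    exact h

/-- Logarithmic differentiation of `thetaD 1 · 0 ^ 8 = c η²⁴`. -/
lemma thetaD_three {τ : ℂ} (hτ : 0 < τ.im) : thetaD 3 τ 0 = Eis2 τ / 4 * thetaD 1 τ 0 := by
  obtain ⟨c, hc⟩ := CuspForm.exists_smul_discriminant_of_weight_eq_twelve thetaCusp
  have hc' : ∀ t : ℂ, 0 < t.im → c * ModularForm.eta t ^ 24 = thetaD 1 t 0 ^ 8 := fun t ht =>
    congrArg (fun f : CuspForm 𝒮ℒ 12 => f ⟨t, ht⟩) hc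
  have hU := isOpen_upperHalfPlaneSet.mem_nhds hτ
  have hd := hasDerivAt_thetaD_tau 1 hτ 0
  have hpi : (π : ℂ) * I ≠ 0 := mul_ne_zero (by exact_mod_cast Real.pi_ne_zero) Complex.I_ne_zero
  by_cases h0 : c = 0
  · have hz : ∀ t : ℂ, 0 < t.im → thetaD 1 t 0 = 0 := fun t ht => by
      have := hc' t ht
      rw [h0, zero_mul] at this
      exact pow_eq_zero_iff (by norm_num) |>.1 this.symm
    have hd0 : HasDerivAt (fun t => thetaD 1 t 0) 0 τ :=
      (hasDerivAt_const τ (0 : ℂ)).congr_of_eventuallyEq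
        (by filter_upwards [hU] with t ht using hz t ht)
    have h3 := hd.unique hd0
    rw [hz τ hτ, mul_zero]
    exact (mul_eq_zero.1 h3).resolve_left hpi
  · have heta : ModularForm.eta τ ≠ 0 := eta_ne_zero hτ
    have hne : thetaD 1 τ 0 ≠ 0 := by
      intro h
      have := hc' τ hτ
      rw [h, zero_pow (by norm_num)] at this
      exact mul_ne_zero h0 (pow_ne_zero _ heta) this
    have hl : deriv ModularForm.eta τ = π * I / 12 * Eis2 τ * ModularForm.eta τ := by
      have := ModularForm.logDeriv_eta_eq_E2 ⟨τ, hτ⟩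
      rw [← Eis2_eq, logDeriv_apply, div_eq_iff heta] at this
      exact this
    have h1 := ((differentiableAt_eta_of_mem_upperHalfPlaneSet hτ).hasDerivAt.pow 24).const_mul c
    have h2 := (hd.pow 8).congr_of_eventuallyEq
      (f₁ := fun t => c * ModularForm.eta t ^ 24) (by filter_upwards [hU] with t ht using hc' t ht)
    have h3 := h1.unique h2
    rw [hl] at h3
    have h4 := hc' τ hτ
    norm_num at h3
    apply mul_left_cancel₀ (mul_ne_zero hpi (pow_ne_zero 7 hne))
    linear_combination -h3 / 8 + π * I * Eis2 τ / 4 * h4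

/-- Differentiating `thetaD_three` in `τ` and applying Ramanujan's formula for the derivative of
`E₂`. -/
lemma thetaD_five {τ : ℂ} (hτ : 0 < τ.im) :
    thetaD 5 τ 0 = (5 / 48 * Eis2 τ ^ 2 - Eis4 τ / 24) * thetaD 1 τ 0 := by
  have hpi : (π : ℂ) * I ≠ 0 := mul_ne_zero (by exact_mod_cast Real.pi_ne_zero) Complex.I_ne_zero
  have h1 := hasDerivAt_thetaD_tau 3 hτ 0
  have h2 := ((hasDerivAt_Eis2 hτ).div_const 4).mul (hasDerivAt_thetaD_tau 1 hτ 0)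
  have h3 := h2.congr_of_eventuallyEq (f₁ := fun t => thetaD 3 t 0)
    (by filter_upwards [isOpen_upperHalfPlaneSet.mem_nhds hτ] with t ht using thetaD_three ht)
  have h4 := h1.unique h3
  norm_num at h4
  rw [thetaD_three hτ] at h4
  apply mul_left_cancel₀ hpi
  linear_combination h4

end ThetaConstants

/-! ### The heat operator on products of theta series -/

lemma hasDerivAt_thetaD_mul_tau (i j : ℕ) {τ : ℂ} (hτ : 0 < τ.im) (z : ℂ) :
    HasDerivAt (fun t => thetaD i t z * thetaD j t (2 * z))
      (π * I * (thetaD (i + 2) τ z * thetaD j τ (2 * z)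
        + thetaD i τ z * thetaD (j + 2) τ (2 * z))) τ :=
  ((hasDerivAt_thetaD_tau i hτ z).mul (hasDerivAt_thetaD_tau j hτ (2 * z))).congr_deriv (by ring)

lemma hasDerivAt_M0_tau {τ : ℂ} (hτ : 0 < τ.im) (z : ℂ) :
    HasDerivAt (fun t => M0 t z) (π * I * (thetaD 2 τ z * thetaD 0 τ (2 * z)
      + thetaD 0 τ z * thetaD 2 τ (2 * z))) τ :=
  hasDerivAt_thetaD_mul_tau 0 0 hτ z

lemma hasDerivAt_M2_tau {τ : ℂ} (hτ : 0 < τ.im) (z : ℂ) :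
    HasDerivAt (fun t => M2 t z) (π * I * (4 * (thetaD 4 τ z * thetaD 0 τ (2 * z))
      - 4 * (thetaD 3 τ z * thetaD 1 τ (2 * z)) + 5 * (thetaD 2 τ z * thetaD 2 τ (2 * z))
      - 4 * (thetaD 1 τ z * thetaD 3 τ (2 * z)) + thetaD 0 τ z * thetaD 4 τ (2 * z))) τ :=
  (((hasDerivAt_thetaD_mul_tau 2 0 hτ z).const_mul 4).sub
    ((hasDerivAt_thetaD_mul_tau 1 1 hτ z).const_mul 4)).add (hasDerivAt_thetaD_mul_tau 0 2 hτ z)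
    |>.congr_deriv (by ring)

/-- The modular heat operator of index `5/2`, evaluated from a `τ`-derivative `πi A` and a second
`z`-derivative `(2πi)² B`. -/
lemma heatMod_eq (k : ℚ) {φ : ℂ → ℂ → ℂ} {τ z A B : ℂ} {φ' : ℂ → ℂ}
    (hA : HasDerivAt (fun t => φ t z) (π * I * A) τ)
    (h1 : ∀ w, HasDerivAt (φ τ) (2 * π * I * φ' w) w)
    (h2 : HasDerivAt φ' (2 * π * I * B) z) :
    heatMod (5 / 2) k φ τ z
      = 6 * A - 6 / 5 * B - ((2 * k - 1) / 2) * Eis2 τ * φ τ z := by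
  have hpi : (π : ℂ) ≠ 0 := by exact_mod_cast Real.pi_ne_zero
  have hd : deriv (φ τ) = fun w => 2 * π * I * φ' w := funext fun w => (h1 w).deriv
  rw [heatMod, heatOp, hA.deriv, hd, (h2.const_mul _).deriv]
  have e1 : 12 / (2 * π * I) * (π * I * A) = 6 * A := by
    field_simp [Complex.I_ne_zero]
    ring
  have e2 : 3 / (4 * (π : ℂ) ^ 2 * ((5 / 2 : ℚ) : ℂ)) * (2 * π * I * (2 * π * I * B))
      = -(6 / 5 * B) := by
    push_cast
    field_simp
    ring_nf
    rw [Complex.I_sq]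
    ring
  rw [e1, e2]
  ring

/-- The heat operator of index `5/2` multiplies the `(r, s)`-term of the double theta series by
`(6/5)(2r - s)²`. -/
lemma heatMod_one {τ : ℂ} (hτ : 0 < τ.im) (z : ℂ) :
    heatMod (5 / 2) 1 M0 τ z = 6 / 5 * M2 τ z - 1 / 2 * Eis2 τ * M0 τ z := by
  rw [heatMod_eq 1 (hasDerivAt_M0_tau hτ z) (hasDerivAt_M0 hτ) (hasDerivAt_M0' hτ z), M2]
  push_cast
  ring

/-- The second iterate: the `E₂²` and `E₄` terms arise from Ramanujan's formula for the
derivative of `E₂`. -/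
lemma heatMod_three {τ : ℂ} (hτ : 0 < τ.im) (z : ℂ) :
    heatMod (5 / 2) 3 (heatMod (5 / 2) 1 M0) τ z =
      36 / 25 * M4 τ z - 18 / 5 * Eis2 τ * M2 τ z
        + (3 / 4 * Eis2 τ ^ 2 + 1 / 2 * Eis4 τ) * M0 τ z := by
  have hU : ∀ᶠ t in nhds τ, 0 < t.im :=
    (isOpen_lt continuous_const Complex.continuous_im).mem_nhds hτ
  have hA := (((hasDerivAt_M2_tau hτ z).const_mul (6 / 5)).sub
    (((hasDerivAt_Eis2 hτ).const_mul (1 / 2)).mul (hasDerivAt_M0_tau hτ z))).congr_of_eventuallyEq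
    (f₁ := fun t => heatMod (5 / 2) 1 M0 t z) (hU.mono fun t ht => heatMod_one ht z)
  have h0 : heatMod (5 / 2) 1 M0 τ = fun w => 6 / 5 * M2 τ w - 1 / 2 * Eis2 τ * M0 τ w :=
    funext (heatMod_one hτ)
  have h1 (w : ℂ) : HasDerivAt (heatMod (5 / 2) 1 M0 τ)
      (2 * π * I * (6 / 5 * M2' τ w - 1 / 2 * Eis2 τ * M0' τ w)) w := by
    rw [h0]
    exact (((hasDerivAt_M2 hτ w).const_mul _).sub ((hasDerivAt_M0 hτ w).const_mul _)).congr_deriv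
      (by ring)
  have h2 := ((hasDerivAt_M2' hτ z).const_mul (6 / 5)).sub
    ((hasDerivAt_M0' hτ z).const_mul (1 / 2 * Eis2 τ))
  have h3 := heatMod_eq 3
    (A := 6 / 5 * (4 * (thetaD 4 τ z * thetaD 0 τ (2 * z))
      - 4 * (thetaD 3 τ z * thetaD 1 τ (2 * z)) + 5 * (thetaD 2 τ z * thetaD 2 τ (2 * z))
      - 4 * (thetaD 1 τ z * thetaD 3 τ (2 * z)) + thetaD 0 τ z * thetaD 4 τ (2 * z))
      - ((Eis2 τ ^ 2 - Eis4 τ) / 12 * M0 τ z + 1 / 2 * Eis2 τ *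
        (thetaD 2 τ z * thetaD 0 τ (2 * z) + thetaD 0 τ z * thetaD 2 τ (2 * z))))
    (B := 6 / 5 * (4 * (thetaD 4 τ z * thetaD 0 τ (2 * z))
      + 12 * (thetaD 3 τ z * thetaD 1 τ (2 * z)) + (thetaD 2 τ z * thetaD 2 τ (2 * z))
      - 12 * (thetaD 1 τ z * thetaD 3 τ (2 * z)) + 4 * (thetaD 0 τ z * thetaD 4 τ (2 * z)))
      - 1 / 2 * Eis2 τ * (thetaD 2 τ z * thetaD 0 τ (2 * z)
        + 4 * (thetaD 1 τ z * thetaD 1 τ (2 * z)) + 4 * (thetaD 0 τ z * thetaD 2 τ (2 * z))))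
    (hA.congr_deriv (by ring)) h1 (h2.congr_deriv (by ring))
  rw [h3, h0]
  simp only [M4, M2, M0]
  push_cast
  ring

/-- Kaneko–Zagier type equation for `F(τ,z) = ϑ(τ,z)·ϑ(τ,2z)`:
`H^{(5/2)}_{3}(H^{(5/2)}_{1}(F)) − (11/25)·E₄·F = 0`. -/
theorem statement10 (τ z : ℂ) (hτ : 0 < τ.im) :
    heatMod (5/2) 3 (heatMod (5/2) 1 (fun t w => thetaJ t w * thetaJ t (2 * w))) τ z
      - (11/25) * Eis4 τ * (thetaJ τ z * thetaJ τ (2 * z)) = 0 := by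
  have hF : (fun t w => thetaJ t w * thetaJ t (2 * w)) = M0 := by
    funext t w
    rw [thetaJ_eq, thetaJ_eq, M0]
  have hFz : thetaJ τ z * thetaJ τ (2 * z) = M0 τ z := by rw [thetaJ_eq, thetaJ_eq, M0]
  rw [hF, hFz, heatMod_three hτ]
  linear_combination combination_eq_zero hτ (thetaD_three hτ) (thetaD_five hτ) z
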